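/- Let G = (V, E) be a simple connected graph on |V| = N ≥ 3 vertices, and let I(k) denote the number of spanning forests of G with k edges. Then I(N−2)² ≥ (3/2)·(1 + 1/(N−2))·I(N−3)·I(N−1), and equality holds if and only if G is a cycle on N vertices. -/

import Mathlib

open scoped Classical BigOperators

noncomputable section

/-- The number of spanning forests with `k` edges of a simple graph `G`:
sets of `k` edges of `G` that contain no cycle. -/
def numForests (V : Type*) [Fintype V] [DecidableEq V] (G : SimpleGraph V) (k : ℕ) : ℕ :=
  (Finset.univ.filter (fun F : Finset (Sym2 V) =>
    (F : Set (Sym2 V)) ⊆ G.edgeSet ∧ F.card = k ∧ (SimpleGraph.fromEdgeSet (F : Set (Sym2 V))).IsAcyclic)).card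

/-!
For an independent set `S` of a matroid, the second derivatives of the independence polynomial of
the contraction by `S`, bordered by one further variable that records the complementary degree,
form a symmetric matrix. All these matrices satisfy a reverse Cauchy–Schwarz inequality. In
contractions of rank two this is the ordinary Cauchy–Schwarz inequality for the sizes of the
parallel classes, of which a graph has at most three; Euler's identity and a spectral argument carry
it from the contractions by `S ∪ {i}` to the contraction by `S`. The case `S = ∅` is the inequality
between the numbers of forests.

In the case of equality the matrix of `S = ∅` has a kernel vector, and this vector passes to all
contractions. In rank two it forces the three parallel classes to have a common size, which is the
same for all contractions. Contracting a spanning tree deprived of the edges at two of its leaves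
shows that this size is `1`, since at most one edge joins the two leaves. A matroid all of whose
contractions of rank two consist of three pairwise non-parallel elements is a circuit.
-/

section ReverseCauchySchwarz

open scoped Matrix

variable {m n : Type*} [Fintype m] [Fintype n]

/-- The reverse Cauchy–Schwarz inequality at `w` for the quadratic form of `A`. For symmetric `A`
with `w ⬝ᵥ A *ᵥ w > 0` it says that `A` has exactly one positive eigenvalue. -/
def IsHyperbolicAt (A : Matrix n n ℝ) (w : n → ℝ) : Prop :=
  ∀ v, (v ⬝ᵥ A *ᵥ v) * (w ⬝ᵥ A *ᵥ w) ≤ (w ⬝ᵥ A *ᵥ v) ^ 2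

theorem dotProduct_mulVec_comm_of_isSymm {A : Matrix n n ℝ} (hA : A.IsSymm) (x y : n → ℝ) :
    x ⬝ᵥ A *ᵥ y = y ⬝ᵥ A *ᵥ x := by
  rw [Matrix.dotProduct_mulVec, ← Matrix.mulVec_transpose, hA.eq, dotProduct_comm]

theorem dotProduct_mulVec_add_smul_self {A : Matrix n n ℝ} (hA : A.IsSymm) (x y : n → ℝ) (c : ℝ) :
    (x + c • y) ⬝ᵥ A *ᵥ (x + c • y) =
      x ⬝ᵥ A *ᵥ x + 2 * c * (y ⬝ᵥ A *ᵥ x) + c ^ 2 * (y ⬝ᵥ A *ᵥ y) := by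
  simp only [Matrix.mulVec_add, Matrix.mulVec_smul, add_dotProduct, dotProduct_add,
    smul_dotProduct, dotProduct_smul, smul_eq_mul, dotProduct_mulVec_comm_of_isSymm hA x y]
  ring

theorem IsHyperbolicAt.of_nonpos_on_hyperplane {A : Matrix n n ℝ} (hA : A.IsSymm) {l w : n → ℝ}
    (hl : ∀ v, l ⬝ᵥ v = 0 → v ⬝ᵥ A *ᵥ v ≤ 0) (hw : 0 ≤ w ⬝ᵥ A *ᵥ w) : IsHyperbolicAt A w := by
  intro v
  by_cases hlw : l ⬝ᵥ w = 0
  · rw [le_antisymm (hl w hlw) hw, mul_zero]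
    positivity
  set c : ℝ := -(l ⬝ᵥ v) / (l ⬝ᵥ w)
  have hproj : l ⬝ᵥ (v + c • w) = 0 := by
    rw [dotProduct_add, dotProduct_smul, smul_eq_mul, div_mul_cancel₀ _ hlw, add_neg_cancel]
  have hQ := hl _ hproj
  rw [dotProduct_mulVec_add_smul_self hA] at hQ
  nlinarith [mul_nonneg hw (neg_nonneg.2 hQ), sq_nonneg (w ⬝ᵥ A *ᵥ v + c * (w ⬝ᵥ A *ᵥ w))]

theorem IsHyperbolicAt.smul_mulVec_eq {A : Matrix n n ℝ} (hA : A.IsSymm) {w u : n → ℝ}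
    (hw : IsHyperbolicAt A w)
    (hu : (u ⬝ᵥ A *ᵥ u) * (w ⬝ᵥ A *ᵥ w) = (w ⬝ᵥ A *ᵥ u) ^ 2) :
    (w ⬝ᵥ A *ᵥ w) • A *ᵥ u = (w ⬝ᵥ A *ᵥ u) • A *ᵥ w := by
  refine dotProduct_eq _ _ fun z ↦ ?_
  have hdefect : ∀ s : ℝ, 0 ≤ ((w ⬝ᵥ A *ᵥ z) ^ 2 - (w ⬝ᵥ A *ᵥ w) * (z ⬝ᵥ A *ᵥ z)) * (s * s) +
      2 * ((w ⬝ᵥ A *ᵥ u) * (w ⬝ᵥ A *ᵥ z) - (w ⬝ᵥ A *ᵥ w) * (z ⬝ᵥ A *ᵥ u)) * s + 0 := by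
    intro s
    have h := hw (u + s • z)
    rw [dotProduct_mulVec_add_smul_self hA, Matrix.mulVec_add, Matrix.mulVec_smul, dotProduct_add,
      dotProduct_smul, smul_eq_mul] at h
    linear_combination h - hu
  have hdiscrim := discrim_le_zero hdefect
  rw [discrim, mul_zero, sub_zero] at hdiscrim
  have hlin := pow_eq_zero_iff two_ne_zero |>.1 (le_antisymm hdiscrim (sq_nonneg _))
  rw [smul_dotProduct, smul_dotProduct, dotProduct_comm _ z, dotProduct_comm _ z,
    dotProduct_mulVec_comm_of_isSymm hA z w, smul_eq_mul, smul_eq_mul]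
  linear_combination -hlin / 2

theorem IsHyperbolicAt.mulVec_eq_zero {A : Matrix n n ℝ} (hA : A.IsSymm) {w u : n → ℝ}
    (hw : IsHyperbolicAt A w) (hpos : 0 < w ⬝ᵥ A *ᵥ w) (hwu : w ⬝ᵥ A *ᵥ u = 0)
    (huu : u ⬝ᵥ A *ᵥ u = 0) : A *ᵥ u = 0 := by
  have h := hw.smul_mulVec_eq hA (u := u) (by rw [huu, hwu]; ring)
  rw [hwu, zero_smul] at h
  exact (smul_eq_zero.1 h).resolve_left hpos.ne'

theorem dotProduct_congruence_mulVec (P : Matrix m m ℝ) (K : Matrix m n ℝ) (x y : n → ℝ) :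
    x ⬝ᵥ (Kᵀ * P * K) *ᵥ y = (K *ᵥ x) ⬝ᵥ P *ᵥ (K *ᵥ y) := by
  rw [← Matrix.mulVec_mulVec, ← Matrix.mulVec_mulVec, Matrix.dotProduct_mulVec,
    Matrix.vecMul_transpose]

theorem IsHyperbolicAt.congruence {P : Matrix m m ℝ} {K : Matrix m n ℝ} {w : n → ℝ}
    (h : IsHyperbolicAt P (K *ᵥ w)) : IsHyperbolicAt (Kᵀ * P * K) w := by
  intro v
  simp only [dotProduct_congruence_mulVec]
  exact h _

theorem exists_mulVec_eq_of_dotProduct_ker_eq_zero {A : Matrix n n ℝ} (hA : A.IsSymm)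
    {b : n → ℝ} (hb : ∀ k, A *ᵥ k = 0 → b ⬝ᵥ k = 0) : ∃ z, A *ᵥ z = b := by
  have hmem : dotProductEquiv ℝ n b ∈ A.mulVecLin.dualMap.range := by
    rw [LinearMap.range_dualMap_eq_dualAnnihilator_ker, Submodule.mem_dualAnnihilator]
    exact fun k hk ↦ hb k hk
  obtain ⟨φ, hφ⟩ := hmem
  obtain ⟨z, rfl⟩ := (dotProductEquiv ℝ n).surjective φ
  refine ⟨z, dotProduct_eq _ _ fun x ↦ ?_⟩
  rw [dotProduct_comm, dotProduct_mulVec_comm_of_isSymm hA]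
  exact LinearMap.congr_fun hφ x

end ReverseCauchySchwarz

section SpectralGap

open scoped Matrix

variable {m n : Type*} [Fintype m] [Fintype n]

theorem inner_map_self_nonpos_of_eigenvectors {E : Type*} [NormedAddCommGroup E]
    [InnerProductSpace ℝ E] [FiniteDimensional ℝ E] {T : E →ₗ[ℝ] E} (hT : T.IsSymmetric) {e z : E}
    (heig : ∀ μ : ℝ, 0 < μ → ∀ u, T u = μ • u → ∃ c : ℝ, u = c • e) (hz : inner ℝ e z = 0) :
    inner ℝ z (T z) ≤ 0 := by
  set B := hT.eigenvectorBasis rfl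
  have hTB (k) : T (B k) = hT.eigenvalues rfl k • B k := hT.apply_eigenvectorBasis rfl k
  rw [← B.sum_inner_mul_inner]
  refine Finset.sum_nonpos fun k _ ↦ ?_
  rw [← hT, hTB, real_inner_smul_left, real_inner_comm z]
  rcases le_or_gt (hT.eigenvalues rfl k) 0 with hk | hk
  · rw [mul_left_comm]
    exact mul_nonpos_of_nonpos_of_nonneg hk (mul_self_nonneg _)
  · obtain ⟨c, hc⟩ := heig (hT.eigenvalues rfl k) hk (B k) (hTB k)
    rw [real_inner_comm, hc, real_inner_smul_left, hz, mul_zero, zero_mul]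

theorem dotProduct_mulVec_nonpos_of_weighted_eigenvectors {A : Matrix n n ℝ} (hA : A.IsSymm)
    {w d z : n → ℝ} (hw : ∀ i, 0 < w i)
    (heig : ∀ μ : ℝ, 0 < μ → ∀ y, A *ᵥ y = μ • (w * y) → ∃ c : ℝ, w * y = c • d)
    (hz : d ⬝ᵥ z = 0) : z ⬝ᵥ A *ᵥ z ≤ 0 := by
  set s : n → ℝ := fun i ↦ √(w i)
  have hss : s * s = w := funext fun i ↦ Real.mul_self_sqrt (hw i).le
  have hsinv : s⁻¹ * s = 1 := funext fun i ↦ inv_mul_cancel₀ (Real.sqrt_pos.2 (hw i)).ne'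
  set K : Matrix n n ℝ := Matrix.diagonal s⁻¹ with hK
  have hKv (v : n → ℝ) : K *ᵥ v = s⁻¹ * v := funext fun i ↦ Matrix.mulVec_diagonal _ _ i
  have hX : (Kᵀ * A * K).IsHermitian := by
    rw [Matrix.IsHermitian, Matrix.conjTranspose_eq_transpose_of_trivial]
    simp only [Matrix.transpose_mul, Matrix.transpose_transpose, hA.eq, Matrix.mul_assoc]
  have hnonpos := inner_map_self_nonpos_of_eigenvectors
    (Matrix.isSymmetric_toEuclideanLin_iff.2 hX) (e := WithLp.toLp 2 (s⁻¹ * d))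
    (z := WithLp.toLp 2 (s * z)) (fun μ hμ u hu ↦ ?_) ?_
  · rwa [EuclideanSpace.inner_eq_star_dotProduct, Matrix.ofLp_toLpLin, Matrix.toLin'_apply,
      star_trivial, dotProduct_comm, dotProduct_congruence_mulVec, hKv, ← mul_assoc, hsinv,
      one_mul] at hnonpos
  · have hu' : (Kᵀ * A * K) *ᵥ u.ofLp = μ • u.ofLp := congrArg WithLp.ofLp hu
    rw [← Matrix.mulVec_mulVec, ← Matrix.mulVec_mulVec, hK, Matrix.diagonal_transpose, ← hK, hKv,
      hKv] at hu'
    have hsu : w * (s⁻¹ * u.ofLp) = s * u.ofLp := by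
      rw [← hss, mul_assoc, ← mul_assoc s s⁻¹, mul_comm s s⁻¹, hsinv, one_mul]
    obtain ⟨c, hc⟩ := heig μ hμ (s⁻¹ * u.ofLp) <| by
      rw [hsu, ← mul_smul_comm, ← hu', ← mul_assoc, mul_comm s s⁻¹, hsinv, one_mul]
    refine ⟨c, WithLp.ofLp_injective 2 ?_⟩
    rw [WithLp.ofLp_smul, WithLp.ofLp_toLp, ← mul_smul_comm, ← hc, hsu, ← mul_assoc, hsinv,
      one_mul]
  · rw [EuclideanSpace.inner_eq_star_dotProduct, star_trivial, WithLp.ofLp_toLp, WithLp.ofLp_toLp,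
      ← hz, dotProduct_comm]
    refine Finset.sum_congr rfl fun i _ ↦ ?_
    have hsi : (s i)⁻¹ * s i = 1 := congrFun hsinv i
    simp only [Pi.mul_apply, Pi.inv_apply]
    linear_combination d i * z i * hsi

theorem sum_mul_sub_sq_eq {A : Matrix n n ℝ} (hA : A.IsSymm) (y : n → ℝ) :
    ∑ i, ∑ j, A i j * (y i - y j) ^ 2 = 2 * ((A *ᵥ 1) ⬝ᵥ (y ^ 2) - y ⬝ᵥ A *ᵥ y) := by
  have hrow : ∑ i, ∑ j, A i j * y i ^ 2 = (A *ᵥ 1) ⬝ᵥ (y ^ 2) := by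
    simp only [dotProduct, Matrix.mulVec, Pi.one_apply, mul_one, Pi.pow_apply, Finset.sum_mul]
  have hcol : ∑ i, ∑ j, A i j * y j ^ 2 = (A *ᵥ 1) ⬝ᵥ (y ^ 2) := by
    rw [Finset.sum_comm, ← hrow]
    simp only [hA.apply]
  have hcross : ∑ i, ∑ j, y i * (A i j * y j) = y ⬝ᵥ A *ᵥ y := by
    simp only [dotProduct, Matrix.mulVec, Finset.mul_sum]
  rw [mul_sub, two_mul, ← hcross]
  nth_rw 1 [← hrow]
  rw [← hcol, Finset.mul_sum, ← Finset.sum_add_distrib, ← Finset.sum_sub_distrib]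
  refine Finset.sum_congr rfl fun i _ ↦ ?_
  rw [Finset.mul_sum, ← Finset.sum_add_distrib, ← Finset.sum_sub_distrib]
  exact Finset.sum_congr rfl fun j _ ↦ by ring

theorem eq_of_edge_of_le_dotProduct_mulVec {A : Matrix n n ℝ} (hA : A.IsSymm)
    (hA0 : ∀ i j, 0 ≤ A i j) {y : n → ℝ} (hy : (A *ᵥ 1) ⬝ᵥ (y ^ 2) ≤ y ⬝ᵥ A *ᵥ y) {i j : n}
    (hij : 0 < A i j) : y i = y j := by
  have hterm (i j) : 0 ≤ A i j * (y i - y j) ^ 2 := mul_nonneg (hA0 i j) (sq_nonneg _)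
  have hle : A i j * (y i - y j) ^ 2 ≤ 0 := calc
    A i j * (y i - y j) ^ 2 ≤ ∑ j, A i j * (y i - y j) ^ 2 :=
      Finset.single_le_sum (fun j _ ↦ hterm i j) (Finset.mem_univ j)
    _ ≤ ∑ i, ∑ j, A i j * (y i - y j) ^ 2 :=
      Finset.single_le_sum (f := fun i ↦ ∑ j, A i j * (y i - y j) ^ 2)
        (fun i _ ↦ Finset.sum_nonneg fun j _ ↦ hterm i j) (Finset.mem_univ i)
    _ ≤ 0 := by rw [sum_mul_sub_sq_eq hA]; linarith
  have hsq : (y i - y j) ^ 2 ≤ 0 := nonpos_of_mul_nonpos_right hle hij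
  exact sub_eq_zero.1 (pow_eq_zero_iff two_ne_zero |>.1 (le_antisymm hsq (sq_nonneg _)))

theorem eq_of_generalized_eigenvector {A : Matrix n n ℝ} (hA : A.IsSymm)
    (hA0 : ∀ i j, 0 ≤ A i j)
    (hpull : ∀ y, y ⬝ᵥ A *ᵥ y ≤ ∑ i, (A *ᵥ y) i ^ 2 / (A *ᵥ 1) i)
    {μ : ℝ} (hμ : 0 < μ) {y : n → ℝ} (hy : A *ᵥ y = μ • ((A *ᵥ 1) * y)) {i j : n}
    (hij : Relation.ReflTransGen (fun i j ↦ 0 < A i j) i j) : y i = y j := by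
  have hAy (i) : (A *ᵥ y) i = μ * ((A *ᵥ 1) i * y i) := congrFun hy i
  have henergy : y ⬝ᵥ A *ᵥ y = μ * ((A *ᵥ 1) ⬝ᵥ y ^ 2) := by
    simp only [dotProduct, hAy, Finset.mul_sum, Pi.pow_apply]
    exact Finset.sum_congr rfl fun i _ ↦ by ring
  have hdual : ∑ i, (A *ᵥ y) i ^ 2 / (A *ᵥ 1) i = μ * (μ * ((A *ᵥ 1) ⬝ᵥ y ^ 2)) := by
    simp only [dotProduct, hAy, Finset.mul_sum, Pi.pow_apply]
    refine Finset.sum_congr rfl fun i _ ↦ ?_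
    by_cases hi : (A *ᵥ 1) i = 0
    · simp only [hi, div_zero, zero_mul, mul_zero]
    · field_simp
  have hμ1 : (A *ᵥ 1) ⬝ᵥ y ^ 2 ≤ y ⬝ᵥ A *ᵥ y := by
    have h := hpull y
    rw [hdual, henergy] at h
    exact henergy ▸ le_of_mul_le_mul_left h hμ
  induction hij with
  | refl => rfl
  | tail _ hjk ih => exact ih.trans (eq_of_edge_of_le_dotProduct_mulVec hA hA0 hμ1 hjk)

theorem dotProduct_mulVec_nonpos_of_le_sum_sq_div {A : Matrix n n ℝ} (hA : A.IsSymm)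
    (hA0 : ∀ i j, 0 ≤ A i j)
    (hconn : ∀ i j, 0 < (A *ᵥ 1) i → 0 < (A *ᵥ 1) j →
      Relation.ReflTransGen (fun i j ↦ 0 < A i j) i j)
    (hpull : ∀ y, y ⬝ᵥ A *ᵥ y ≤ ∑ i, (A *ᵥ y) i ^ 2 / (A *ᵥ 1) i) {z : n → ℝ}
    (hz : (A *ᵥ 1) ⬝ᵥ z = 0) : z ⬝ᵥ A *ᵥ z ≤ 0 := by
  have hd (i) : (A *ᵥ 1) i = ∑ j, A i j := by
    simp only [Matrix.mulVec, dotProduct, Pi.one_apply, mul_one]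
  have hd0 (i) : 0 ≤ (A *ᵥ 1) i := hd i ▸ Finset.sum_nonneg fun j _ ↦ hA0 i j
  have hrow {i} (hi : (A *ᵥ 1) i = 0) (y) : (A *ᵥ y) i = 0 := by
    rw [hd, Finset.sum_eq_zero_iff_of_nonneg fun j _ ↦ hA0 i j] at hi
    exact Finset.sum_eq_zero fun j hj ↦ mul_eq_zero_of_left (hi j hj) _
  set d : n → ℝ := A *ᵥ 1
  set w : n → ℝ := fun i ↦ if d i = 0 then 1 else d i
  refine dotProduct_mulVec_nonpos_of_weighted_eigenvectors hA (w := w)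
    (fun i ↦ ?_) (fun μ hμ y hy ↦ ?_) hz
  · by_cases hi : d i = 0
    · simp only [w, if_pos hi, one_pos]
    · simpa only [w, if_neg hi] using (hd0 i).lt_of_ne' hi
  have hwy : w * y = d * y := by
    funext i
    by_cases hi : d i = 0
    · have hwyi : μ * (w * y) i = 0 := (congrFun hy i).symm.trans (hrow hi y)
      rw [(mul_eq_zero.1 hwyi).resolve_left hμ.ne', Pi.mul_apply, hi, zero_mul]
    · simp only [w, Pi.mul_apply, if_neg hi]
  rw [hwy] at hy ⊢
  have hconst {i j} (hi : 0 < d i) (hj : 0 < d j) : y i = y j :=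
    eq_of_generalized_eigenvector hA hA0 hpull hμ hy (hconn i j hi hj)
  by_cases hsupp : ∃ j, 0 < d j
  · obtain ⟨j, hj⟩ := hsupp
    refine ⟨y j, funext fun i ↦ ?_⟩
    rcases (hd0 i).eq_or_lt' with hi | hi
    · simp only [Pi.mul_apply, Pi.smul_apply, hi, zero_mul, smul_zero]
    · rw [Pi.mul_apply, hconst hi hj, mul_comm, Pi.smul_apply, smul_eq_mul]
  · have hd_zero : d = 0 := funext fun i ↦ le_antisymm (not_lt.1 fun hi ↦ hsupp ⟨i, hi⟩) (hd0 i)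
    exact ⟨0, by rw [hd_zero, zero_mul, zero_smul]⟩

end SpectralGap

section Border

open scoped Matrix

variable {m n : Type*} [Fintype m] [Fintype n]

theorem mulVec_elim_zero_inr (M : Matrix (m ⊕ n) (m ⊕ n) ℝ) (y : n → ℝ) (i : n) :
    (M *ᵥ Sum.elim (0 : m → ℝ) y) (.inr i) = (M.toBlocks₂₂ *ᵥ y) i := by
  simp only [Matrix.mulVec, dotProduct, Fintype.sum_sum_type, Sum.elim_inl, Sum.elim_inr,
    Pi.zero_apply, mul_zero, Finset.sum_const_zero, zero_add, Matrix.toBlocks₂₂, Matrix.of_apply]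

theorem elim_zero_dotProduct (y : n → ℝ) (x : m ⊕ n → ℝ) :
    Sum.elim (0 : m → ℝ) y ⬝ᵥ x = y ⬝ᵥ (x ∘ Sum.inr) := by
  simp only [dotProduct, Fintype.sum_sum_type, Sum.elim_inl, Sum.elim_inr, Pi.zero_apply,
    zero_mul, Finset.sum_const_zero, zero_add, Function.comp_apply]

/- Adding `s` times a kernel vector `k` of the block leaves the right-hand side of `hbound`
unchanged, while the left-hand side is affine in `s` with slope `2 * (k ⬝ᵥ b)`. -/
theorem dotProduct_ker_toBlocks₂₂_eq_zero {M : Matrix (m ⊕ n) (m ⊕ n) ℝ} (hM : M.IsSymm)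
    {f : (n → ℝ) → ℝ} (hbound : ∀ v, v ⬝ᵥ M *ᵥ v ≤ f ((M *ᵥ v) ∘ Sum.inr)) {k : n → ℝ}
    (hk : M.toBlocks₂₂ *ᵥ k = 0) (v : m ⊕ n → ℝ) : ((M *ᵥ v) ∘ Sum.inr) ⬝ᵥ k = 0 := by
  have hMk : (M *ᵥ Sum.elim (0 : m → ℝ) k) ∘ Sum.inr = 0 :=
    funext fun i ↦ (mulVec_elim_zero_inr M k i).trans (congrFun hk i)
  set b := (M *ᵥ v) ∘ Sum.inr
  by_contra hbk
  have haffine (s : ℝ) : v ⬝ᵥ M *ᵥ v + 2 * s * (b ⬝ᵥ k) ≤ f b := by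
    have hb : (M *ᵥ (v + s • Sum.elim (0 : m → ℝ) k)) ∘ Sum.inr = b := by
      rw [Matrix.mulVec_add, Matrix.mulVec_smul]
      exact (congrArg (b + s • ·) hMk).trans (by rw [smul_zero, add_zero])
    have h := hbound (v + s • Sum.elim (0 : m → ℝ) k)
    rwa [hb, dotProduct_mulVec_add_smul_self hM, elim_zero_dotProduct, elim_zero_dotProduct, hMk,
      dotProduct_zero, mul_zero, add_zero, dotProduct_comm k] at h
  have h := haffine ((f b - v ⬝ᵥ M *ᵥ v + 1) / (2 * (b ⬝ᵥ k)))
  rw [mul_right_comm, mul_div_cancel₀ _ (mul_ne_zero two_ne_zero hbk)] at h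
  linarith

theorem IsHyperbolicAt.of_border {M : Matrix (m ⊕ n) (m ⊕ n) ℝ} (hM : M.IsSymm)
    (hM0 : ∀ i j, 0 ≤ M (.inr i) (.inr j))
    (hconn : ∀ i j, 0 < (M *ᵥ Sum.elim (0 : m → ℝ) 1) (.inr i) →
      0 < (M *ᵥ Sum.elim (0 : m → ℝ) 1) (.inr j) →
      Relation.ReflTransGen (fun i j ↦ 0 < M (.inr i) (.inr j)) i j)
    (hpull : ∀ v, v ⬝ᵥ M *ᵥ v ≤
      ∑ i, (M *ᵥ v) (.inr i) ^ 2 / (M *ᵥ Sum.elim (0 : m → ℝ) 1) (.inr i)) :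
    IsHyperbolicAt M (Sum.elim (0 : m → ℝ) 1) := by
  set A : Matrix n n ℝ := M.toBlocks₂₂
  have hMA (y : n → ℝ) : (M *ᵥ Sum.elim (0 : m → ℝ) y) ∘ Sum.inr = A *ᵥ y :=
    funext (mulVec_elim_zero_inr M y)
  have hA : A.IsSymm := Matrix.IsSymm.ext fun i j ↦ hM.apply (.inr i) (.inr j)
  simp only [mulVec_elim_zero_inr] at hconn hpull
  have hgap {z} (hz : (A *ᵥ 1) ⬝ᵥ z = 0) : z ⬝ᵥ A *ᵥ z ≤ 0 :=
    dotProduct_mulVec_nonpos_of_le_sum_sq_div hA hM0 hconn (fun y ↦ by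
      have hy := hpull (Sum.elim (0 : m → ℝ) y)
      simpa only [elim_zero_dotProduct, hMA, mulVec_elim_zero_inr] using hy) hz
  refine .of_nonpos_on_hyperplane hM (l := M *ᵥ Sum.elim (0 : m → ℝ) 1) (fun v hv ↦ ?_) ?_
  · obtain ⟨z, hz⟩ := exists_mulVec_eq_of_dotProduct_ker_eq_zero hA fun k hk ↦
      dotProduct_ker_toBlocks₂₂_eq_zero hM (f := fun b ↦ ∑ i, b i ^ 2 / (A *ᵥ 1) i) hpull hk v
    have hzgap : z ⬝ᵥ A *ᵥ z ≤ 0 := hgap <| by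
      rw [dotProduct_comm, dotProduct_mulVec_comm_of_isSymm hA, hz, ← elim_zero_dotProduct,
        dotProduct_mulVec_comm_of_isSymm hM, dotProduct_comm, hv]
    set v' := v + (-1 : ℝ) • Sum.elim (0 : m → ℝ) z
    have hv' : (M *ᵥ v') ∘ Sum.inr = 0 := by
      rw [Matrix.mulVec_add, Matrix.mulVec_smul]
      exact (congrArg₂ (fun a b ↦ a + (-1 : ℝ) • b) hz.symm (hMA z)).trans (by
        rw [neg_one_smul, add_neg_cancel])
    have hQv' : v' ⬝ᵥ M *ᵥ v' ≤ 0 := (hpull v').trans_eq <| Finset.sum_eq_zero fun i _ ↦ by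
      rw [show (M *ᵥ v') (.inr i) = 0 from congrFun hv' i, zero_pow two_ne_zero, zero_div]
    rw [dotProduct_mulVec_add_smul_self hM, elim_zero_dotProduct, elim_zero_dotProduct, hMA,
      ← hz] at hQv'
    linarith
  · rw [elim_zero_dotProduct, hMA]
    exact Finset.sum_nonneg fun i _ ↦ mul_nonneg zero_le_one <|
      Finset.sum_nonneg fun j _ ↦ mul_nonneg (hM0 i j) zero_le_one

end Border

section IndepCount

/-- The number of independent sets of size `k` of a matroid. -/
def numIndep {α : Type*} (M : Matroid α) (k : ℕ) : ℕ :=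
  {B : Finset α | M.Indep B ∧ B.card = k}.ncard

theorem exists_indep_superset_card_eq {α : Type*} [Finite α] {M : Matroid α} {k : ℕ}
    {S : Finset α} (hS : M.Indep (S : Set α)) (hSk : S.card ≤ k)
    (hk : (k : ℕ∞) ≤ M.eRank) : ∃ B : Finset α, M.Indep B ∧ S ⊆ B ∧ B.card = k := by
  have := Fintype.ofFinite α
  obtain ⟨B, hB, hSB⟩ := hS.exists_isBase_superset
  have hkB : k ≤ B.toFinset.card := by
    rwa [← hB.encard_eq_eRank, Set.encard_eq_coe_toFinset_card, Nat.cast_le] at hk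
  obtain ⟨C, hSC, hCB, hC⟩ :=
    Finset.exists_subsuperset_card_eq (Set.subset_toFinset.2 hSB) hSk hkB
  exact ⟨C, hB.indep.subset (Set.subset_toFinset.1 hCB), hSC, hC⟩

theorem exists_mem_ground_notMem_closure {α : Type*} {M : Matroid α} {X : Set α}
    (hX : X.encard < M.eRank) : ∃ e ∈ M.E, e ∉ M.closure X := by
  by_contra! h
  refine hX.not_ge ?_
  calc M.eRank = M.eRk M.E := M.eRk_ground.symm
    _ ≤ M.eRk (M.closure X) := M.eRk_mono h
    _ = M.eRk X := M.eRk_closure_eq X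
    _ ≤ X.encard := M.eRk_le_encard X

variable {α : Type*} [Fintype α] {M : Matroid α} {k : ℕ} {S T : Finset α} {i : α}

/-- The number of independent sets of size `k` that contain `S`, and contain `T` outside `S`. Up to
normalization this is the iterated derivative along `T` of the degree-`k` independence polynomial of
the contraction of `M` by `S`; it is `0` when `S` and `T` meet. -/
def numIndepOver (M : Matroid α) (k : ℕ) (S T : Finset α) : ℕ :=
  Finset.card {B : Finset α | M.Indep B ∧ B.card = k ∧ S ⊆ B ∧ T ⊆ B \ S}

theorem numIndepOver_empty : numIndepOver M k ∅ ∅ = numIndep M k := by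
  simp only [numIndepOver, numIndep, Finset.empty_subset, and_true, ← Set.ncard_coe_finset,
    Finset.coe_filter, Finset.mem_univ, true_and]

theorem numIndepOver_pos_iff : 0 < numIndepOver M k S T ↔
    ∃ B : Finset α, M.Indep B ∧ B.card = k ∧ S ⊆ B ∧ T ⊆ B \ S := by
  simp only [numIndepOver, Finset.card_pos, Finset.Nonempty, Finset.mem_filter, Finset.mem_univ,
    true_and]

theorem numIndepOver_eq_zero_of_not_indep (hS : ¬ M.Indep (S : Set α)) :
    numIndepOver M k S T = 0 := by
  by_contra h
  obtain ⟨B, hB, -, hSB, -⟩ := numIndepOver_pos_iff.1 (Nat.pos_of_ne_zero h)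
  exact hS (hB.subset (Finset.coe_subset.2 hSB))

theorem numIndepOver_eq_zero_of_mem (hS : i ∈ S) (hT : i ∈ T) : numIndepOver M k S T = 0 := by
  by_contra h
  obtain ⟨B, -, -, -, hTB⟩ := numIndepOver_pos_iff.1 (Nat.pos_of_ne_zero h)
  exact (Finset.mem_sdiff.1 (hTB hT)).2 hS

theorem numIndepOver_pos (hS : M.Indep (S : Set α)) (hSk : S.card ≤ k) (hk : (k : ℕ∞) ≤ M.eRank) :
    0 < numIndepOver M k S ∅ := by
  obtain ⟨B, hB, hSB, hBk⟩ := exists_indep_superset_card_eq hS hSk hk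
  exact numIndepOver_pos_iff.2 ⟨B, hB, hBk, hSB, Finset.empty_subset _⟩

theorem numIndepOver_insert_left (hi : i ∉ S) : numIndepOver M k (insert i S) T =
    if i ∈ T then 0 else numIndepOver M k S (insert i T) := by
  split_ifs with hiT
  · exact numIndepOver_eq_zero_of_mem (Finset.mem_insert_self i S) hiT
  · refine congrArg Finset.card (Finset.filter_congr fun B _ ↦ ?_)
    simp only [Finset.insert_subset_iff, Finset.subset_sdiff,
      Finset.disjoint_insert_right, Finset.disjoint_insert_left]
    tauto

theorem sum_numIndepOver_insert_right (M : Matroid α) (k : ℕ) (S T : Finset α) :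
    ∑ i, ((if i ∈ T then 0 else numIndepOver M k S (insert i T) : ℕ) : ℝ) =
      (k - S.card - T.card) * numIndepOver M k S T := by
  set F : Finset (Finset α) := {B | M.Indep B ∧ B.card = k ∧ S ⊆ B ∧ T ⊆ B \ S} with hF
  have hfiber (i) : (if i ∈ T then 0 else numIndepOver M k S (insert i T)) =
      Finset.card {B ∈ F | i ∈ (B \ S) \ T} := by
    split_ifs with hi
    · simp only [Finset.mem_sdiff, hi, not_true, and_false, Finset.filter_false, Finset.card_empty]
    · refine congrArg Finset.card ?_
      ext B
      simp only [hF, Finset.mem_filter, Finset.mem_univ, true_and, Finset.insert_subset_iff,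
        Finset.mem_sdiff]
      tauto
  have hcard (B) (hB : B ∈ F) : (((B \ S) \ T).card : ℝ) = k - S.card - T.card := by
    obtain ⟨-, hBk, hSB, hTB⟩ := (Finset.mem_filter.1 hB).2
    rw [Finset.cast_card_sdiff hTB, Finset.cast_card_sdiff hSB, hBk]
  have hcount : ∑ i, Finset.card {B ∈ F | i ∈ (B \ S) \ T} = ∑ B ∈ F, ((B \ S) \ T).card := by
    refine (Finset.sum_card_bipartiteAbove_eq_sum_card_bipartiteBelow
      fun i (B : Finset α) ↦ i ∈ (B \ S) \ T).trans (Finset.sum_congr rfl fun B _ ↦ ?_)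
    rw [Finset.bipartiteBelow, Finset.filter_univ_mem]
  simp only [hfiber]
  rw [← Nat.cast_sum, hcount, Nat.cast_sum, Finset.sum_congr rfl hcard, Finset.sum_const,
    nsmul_eq_mul, mul_comm]
  rfl

theorem sum_numIndepOver_insert_left (M : Matroid α) (k : ℕ) (S T : Finset α) :
    ∑ i ∈ Sᶜ, (numIndepOver M k (insert i S) T : ℝ) =
      (k - S.card - T.card) * numIndepOver M k S T := by
  rw [← sum_numIndepOver_insert_right]
  calc ∑ i ∈ Sᶜ, (numIndepOver M k (insert i S) T : ℝ)
    _ = ∑ i ∈ Sᶜ, ((if i ∈ T then 0 else numIndepOver M k S (insert i T) : ℕ) : ℝ) :=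
      Finset.sum_congr rfl fun i hi ↦ by rw [numIndepOver_insert_left (Finset.mem_compl.1 hi)]
    _ = ∑ i, ((if i ∈ T then 0 else numIndepOver M k S (insert i T) : ℕ) : ℝ) := by
      refine Finset.sum_subset (Finset.subset_univ _) fun i _ hi ↦ ?_
      rw [numIndepOver_eq_zero_of_mem (by simpa using hi) (Finset.mem_insert_self i T), ite_self,
        Nat.cast_zero]

theorem numIndepOver_of_card_add (hST : Disjoint S T) (hk : S.card + T.card = k) :
    numIndepOver M k S T = if M.Indep (S ∪ T : Set α) then 1 else 0 := by
  have hunion {B : Finset α} : (B.card = k ∧ S ⊆ B ∧ T ⊆ B \ S) ↔ B = S ∪ T := by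
    refine ⟨fun ⟨hB, hSB, hTB⟩ ↦ ?_, ?_⟩
    · refine (Finset.eq_of_subset_of_card_le
        (Finset.union_subset hSB (hTB.trans Finset.sdiff_subset)) ?_).symm
      rw [Finset.card_union_of_disjoint hST, hk, hB]
    · rintro rfl
      rw [Finset.card_union_of_disjoint hST, Finset.union_sdiff_cancel_left hST]
      exact ⟨hk, Finset.subset_union_left, Finset.Subset.rfl⟩
  simp only [numIndepOver, hunion, ← Finset.coe_union]
  split_ifs with h
  · refine Finset.card_eq_one.2 ⟨S ∪ T, Finset.ext fun B ↦ ?_⟩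
    simp only [Finset.mem_filter, Finset.mem_univ, true_and, Finset.mem_singleton]
    exact ⟨And.right, fun hB ↦ ⟨hB ▸ h, hB⟩⟩
  · refine Finset.card_eq_zero.2 (Finset.filter_eq_empty_iff.2 fun B _ hB ↦ h (hB.2 ▸ hB.1))

end IndepCount

section Hessian

open scoped Matrix

variable {α : Type*} [Fintype α] {M : Matroid α} {w : ℝ} {n : ℕ} {S : Finset α}

/-- Up to normalization, the Hessian at `t = 0`, `x = 1` of the derivative along `S` of
`∑ B, c B * t ^ (n + 2 - #B) * ∏ i ∈ B, x i`, the sum over independent sets `B` of size at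
most `n + 2`. The index `Sum.inl ()` stands for `t`, and `w` is the weight of the `t ^ 2` term. -/
def indepHessian (M : Matroid α) (w : ℝ) (n : ℕ) (S : Finset α) :
    Matrix (Unit ⊕ α) (Unit ⊕ α) ℝ :=
  Matrix.fromBlocks (Matrix.of fun _ _ ↦ w * numIndepOver M n S ∅)
    (Matrix.of fun _ i ↦ (numIndepOver M (n + 1) S {i} : ℝ))
    (Matrix.of fun i _ ↦ (numIndepOver M (n + 1) S {i} : ℝ))
    (Matrix.of fun i j ↦ ((if i = j then 0 else numIndepOver M (n + 2) S {i, j} : ℕ) : ℝ))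

theorem indepHessian_isSymm : (indepHessian M w n S).IsSymm := by
  refine Matrix.IsSymm.fromBlocks rfl rfl (Matrix.IsSymm.ext fun i j ↦ ?_)
  simp only [Matrix.of_apply, Finset.pair_comm j i, @eq_comm _ j i]

theorem indepHessian_inr_inr_nonneg (i j : α) : 0 ≤ indepHessian M w n S (.inr i) (.inr j) :=
  Nat.cast_nonneg _

theorem indepHessian_eq_zero_of_not_indep (hS : ¬ M.Indep (S : Set α)) :
    indepHessian M w n S = 0 := by
  ext (i | i) (j | j) <;>
    simp [indepHessian, numIndepOver_eq_zero_of_not_indep hS]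

theorem indepHessian_mulVec_inl :
    (indepHessian M w n S *ᵥ Sum.elim (0 : Unit → ℝ) 1) (.inl ()) =
      (n + 1 - S.card) * numIndepOver M (n + 1) S ∅ := by
  have h := sum_numIndepOver_insert_right M (n + 1) S ∅
  push_cast [Finset.notMem_empty, if_false, Finset.card_empty, sub_zero] at h
  rw [← h]
  simp [indepHessian, Matrix.mulVec, dotProduct]

theorem indepHessian_mulVec_inr (i : α) :
    (indepHessian M w n S *ᵥ Sum.elim (0 : Unit → ℝ) 1) (.inr i) =
      (n + 1 - S.card) * numIndepOver M (n + 2) S {i} := by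
  have h := sum_numIndepOver_insert_right M (n + 2) S {i}
  push_cast [Finset.mem_singleton, Finset.card_singleton] at h
  rw [show (n + 1 - S.card : ℝ) = n + 2 - S.card - 1 by ring, ← h]
  simp [indepHessian, Matrix.mulVec, dotProduct, Finset.pair_comm i, @eq_comm _ i]

theorem dotProduct_indepHessian_mulVec :
    Sum.elim (0 : Unit → ℝ) 1 ⬝ᵥ indepHessian M w n S *ᵥ Sum.elim (0 : Unit → ℝ) 1 =
      (n + 2 - S.card) * (n + 1 - S.card) * numIndepOver M (n + 2) S ∅ := by
  have h := sum_numIndepOver_insert_right M (n + 2) S ∅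
  push_cast [Finset.notMem_empty, if_false, Finset.card_empty, sub_zero] at h
  rw [elim_zero_dotProduct, one_dotProduct]
  simp only [Function.comp_apply, indepHessian_mulVec_inr]
  rw [← Finset.mul_sum, mul_right_comm, ← h, mul_comm]
  rfl

theorem indepHessian_insert_mulVec {i : α} (hi : i ∉ S) :
    indepHessian M w n (insert i S) *ᵥ Sum.elim (0 : Unit → ℝ) 1 =
      ((n : ℝ) - S.card) • indepHessian M w n S (.inr i) := by
  have hcard : ((insert i S).card : ℝ) = S.card + 1 := by
    rw [Finset.card_insert_of_notMem hi, Nat.cast_succ]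
  funext j
  rcases j with _ | j
  · rw [indepHessian_mulVec_inl, hcard, numIndepOver_insert_left hi]
    simp [indepHessian]
  · rw [indepHessian_mulVec_inr, hcard, numIndepOver_insert_left hi]
    simp [indepHessian]

theorem sum_indepHessian_insert (M : Matroid α) (w : ℝ) (n : ℕ) (S : Finset α) :
    ∑ i ∈ Sᶜ, indepHessian M w n (insert i S) =
      ((n : ℝ) - S.card) • indepHessian M w n S := by
  ext (i | i) (j | j) <;>
    simp only [Matrix.sum_apply, Matrix.smul_apply, smul_eq_mul, indepHessian,
      Matrix.fromBlocks_apply₁₁, Matrix.fromBlocks_apply₁₂, Matrix.fromBlocks_apply₂₁,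
      Matrix.fromBlocks_apply₂₂, Matrix.of_apply]
  · rw [← Finset.mul_sum, sum_numIndepOver_insert_left, Finset.card_empty]
    push_cast
    ring
  · rw [sum_numIndepOver_insert_left, Finset.card_singleton]
    push_cast
    ring
  · rw [sum_numIndepOver_insert_left, Finset.card_singleton]
    push_cast
    ring
  · split_ifs with hij
    · simp
    · rw [sum_numIndepOver_insert_left, Finset.card_pair hij]
      push_cast
      ring

theorem mul_dotProduct_indepHessian_mulVec (v : Unit ⊕ α → ℝ) :
    ((n : ℝ) - S.card) * (v ⬝ᵥ indepHessian M w n S *ᵥ v) =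
      ∑ i ∈ Sᶜ, v ⬝ᵥ indepHessian M w n (insert i S) *ᵥ v := by
  rw [← dotProduct_sum, ← Matrix.sum_mulVec, sum_indepHessian_insert, Matrix.smul_mulVec,
    dotProduct_smul, smul_eq_mul]

theorem dotProduct_indepHessian_insert_mulVec {i : α} (hi : i ∉ S) (v : Unit ⊕ α → ℝ) :
    Sum.elim (0 : Unit → ℝ) 1 ⬝ᵥ indepHessian M w n (insert i S) *ᵥ v =
      ((n : ℝ) - S.card) * (indepHessian M w n S *ᵥ v) (.inr i) := by
  rw [dotProduct_mulVec_comm_of_isSymm indepHessian_isSymm, indepHessian_insert_mulVec hi,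
    dotProduct_smul, dotProduct_comm, smul_eq_mul]
  rfl

theorem numIndepOver_singleton_pos_iff (hn : (n : ℕ∞) ≤ M.eRank) (hS : S.card < n) {i : α} :
    0 < numIndepOver M n S {i} ↔ i ∉ S ∧ M.Indep (insert i S : Set α) := by
  constructor
  · intro h
    obtain ⟨B, hB, -, hSB, hiB⟩ := numIndepOver_pos_iff.1 h
    obtain ⟨hiB, hiS⟩ := Finset.mem_sdiff.1 (Finset.singleton_subset_iff.1 hiB)
    exact ⟨hiS, hB.subset (Set.insert_subset hiB hSB)⟩
  · rintro ⟨hiS, hi⟩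
    rw [← Finset.coe_insert] at hi
    have h := numIndepOver_pos hi ((Finset.card_insert_of_notMem hiS).trans_le hS) hn
    rwa [numIndepOver_insert_left hiS, if_neg (Finset.notMem_empty i)] at h

theorem indepHessian_mulVec_inr_pos_iff (hn : ((n + 2 : ℕ) : ℕ∞) ≤ M.eRank) (hS : S.card ≤ n)
    {i : α} : 0 < (indepHessian M w n S *ᵥ Sum.elim (0 : Unit → ℝ) 1) (.inr i) ↔
      i ∉ S ∧ M.Indep (insert i S : Set α) := by
  have hpos : (0 : ℝ) < n + 1 - S.card := by
    have : (S.card : ℝ) ≤ n := Nat.cast_le.2 hS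
    linarith
  rw [indepHessian_mulVec_inr, mul_pos_iff_of_pos_left hpos, Nat.cast_pos,
    numIndepOver_singleton_pos_iff hn (by lia)]

theorem dotProduct_indepHessian_mulVec_pos (hn : ((n + 2 : ℕ) : ℕ∞) ≤ M.eRank)
    (hS : M.Indep (S : Set α)) (hSn : S.card ≤ n) :
    0 < Sum.elim (0 : Unit → ℝ) 1 ⬝ᵥ indepHessian M w n S *ᵥ Sum.elim (0 : Unit → ℝ) 1 := by
  have hcard : (S.card : ℝ) ≤ n := Nat.cast_le.2 hSn
  have hcount : (0 : ℝ) < numIndepOver M (n + 2) S ∅ :=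
    Nat.cast_pos.2 (numIndepOver_pos hS (by lia) hn)
  rw [dotProduct_indepHessian_mulVec]
  exact mul_pos (mul_pos (by linarith) (by linarith)) hcount

theorem indepHessian_inr_inr_pos (hn : ((n + 2 : ℕ) : ℕ∞) ≤ M.eRank) (hS : S.card ≤ n) {i j : α}
    (hiS : i ∉ S) (hj : j ∉ M.closure (insert i S)) (hi : M.Indep (insert i S : Set α))
    (hjE : j ∈ M.E) : 0 < indepHessian M w n S (.inr i) (.inr j) := by
  have hij := (hi.notMem_closure_iff hjE).1 hj
  have hne : i ≠ j := fun h ↦ hij.2 (h ▸ Set.mem_insert i _)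
  have hcard : (insert i S).card = S.card + 1 := Finset.card_insert_of_notMem hiS
  have h := (numIndepOver_singleton_pos_iff (S := insert i S) (i := j) hn (by lia)).2
    ⟨by simpa using hij.2, by simpa using hij.1⟩
  rw [numIndepOver_insert_left hiS, if_neg (by simpa using hne)] at h
  simpa [indepHessian, hne] using h

theorem reflTransGen_indepHessian_pos (hn : ((n + 2 : ℕ) : ℕ∞) ≤ M.eRank) (hS : S.card ≤ n)
    {i j : α} (hiS : i ∉ S) (hi : M.Indep (insert i S : Set α)) (hjS : j ∉ S)
    (hj : M.Indep (insert j S : Set α)) :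
    Relation.ReflTransGen (fun i j ↦ 0 < indepHessian M w n S (.inr i) (.inr j)) i j := by
  by_cases hij : j ∈ M.closure (insert i S)
  · have hlt : (insert i S : Set α).encard < M.eRank := by
      rw [← Finset.coe_insert, Set.encard_coe_eq_coe_finsetCard]
      refine lt_of_lt_of_le (Nat.cast_lt.2 ?_) hn
      rw [Finset.card_insert_of_notMem hiS]
      lia
    obtain ⟨k, hkE, hk⟩ := exists_mem_ground_notMem_closure hlt
    have hkj : k ∉ M.closure (insert j S) := fun h ↦ hk <|
      M.closure_subset_closure_of_subset_closure (Set.insert_subset hij <|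
        (Set.subset_insert i _).trans (M.subset_closure _ hi.subset_ground)) h
    refine .tail (b := k) (.single (indepHessian_inr_inr_pos hn hS hiS hk hi hkE)) ?_
    rw [indepHessian_isSymm.apply (.inr j) (.inr k)]
    exact indepHessian_inr_inr_pos hn hS hjS hkj hj hkE
  · exact .single (indepHessian_inr_inr_pos hn hS hiS hij hi (hj.subset_ground (.inl rfl)))

theorem dotProduct_indepHessian_insert_mulVec_le (hn : ((n + 2 : ℕ) : ℕ∞) ≤ M.eRank)
    (hS : S.card < n) {i : α} (hi : i ∉ S)
    (hhyp : M.Indep (insert i S : Set α) →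
      IsHyperbolicAt (indepHessian M w n (insert i S)) (Sum.elim 0 1)) (v : Unit ⊕ α → ℝ) :
    v ⬝ᵥ indepHessian M w n (insert i S) *ᵥ v ≤
      (n - S.card) * ((indepHessian M w n S *ᵥ v) (.inr i) ^ 2 /
        (indepHessian M w n S *ᵥ Sum.elim (0 : Unit → ℝ) 1) (.inr i)) := by
  have hc : (0 : ℝ) < n - S.card := sub_pos.2 (Nat.cast_lt.2 hS)
  by_cases hind : M.Indep (insert i S : Set α)
  · have hd := (indepHessian_mulVec_inr_pos_iff (w := w) hn hS.le).2 ⟨hi, hind⟩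
    have h := hhyp hind v
    rw [dotProduct_indepHessian_insert_mulVec hi, dotProduct_indepHessian_insert_mulVec hi] at h
    rw [mul_div_assoc', le_div_iff₀ hd]
    refine le_of_mul_le_mul_left ?_ hc
    linarith
  · rw [indepHessian_eq_zero_of_not_indep (by rwa [Finset.coe_insert]), Matrix.zero_mulVec,
      dotProduct_zero]
    refine mul_nonneg hc.le (div_nonneg (sq_nonneg _) ?_)
    rw [indepHessian_mulVec_inr]
    exact mul_nonneg (by linarith) (Nat.cast_nonneg _)

theorem isHyperbolicAt_indepHessian_of_insert (hn : ((n + 2 : ℕ) : ℕ∞) ≤ M.eRank)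
    (hS : S.card < n)
    (hhyp : ∀ i ∉ S, M.Indep (insert i S : Set α) →
      IsHyperbolicAt (indepHessian M w n (insert i S)) (Sum.elim 0 1)) :
    IsHyperbolicAt (indepHessian M w n S) (Sum.elim 0 1) := by
  have hc : (0 : ℝ) < n - S.card := sub_pos.2 (Nat.cast_lt.2 hS)
  refine .of_border indepHessian_isSymm indepHessian_inr_inr_nonneg (fun i j hi hj ↦ ?_) fun v ↦ ?_
  · rw [indepHessian_mulVec_inr_pos_iff hn hS.le] at hi hj
    exact reflTransGen_indepHessian_pos hn hS.le hi.1 hi.2 hj.1 hj.2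
  · refine le_of_mul_le_mul_left ?_ hc
    rw [mul_dotProduct_indepHessian_mulVec, Finset.mul_sum]
    refine (Finset.sum_le_sum fun i hi ↦ ?_).trans
      (Finset.sum_le_sum_of_subset_of_nonneg (Finset.subset_univ Sᶜ) fun i _ _ ↦ ?_)
    · have hiS := Finset.mem_compl.1 hi
      exact dotProduct_indepHessian_insert_mulVec_le hn hS hiS (hhyp i hiS) v
    · rw [indepHessian_mulVec_inr]
      have : (0 : ℝ) ≤ n + 1 - S.card := by linarith
      positivity

theorem isHyperbolicAt_indepHessian (hn : ((n + 2 : ℕ) : ℕ∞) ≤ M.eRank)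
    (hbase : ∀ S : Finset α, M.Indep S → S.card = n →
      IsHyperbolicAt (indepHessian M w n S) (Sum.elim 0 1))
    (hS : M.Indep (S : Set α)) (hSn : S.card ≤ n) :
    IsHyperbolicAt (indepHessian M w n S) (Sum.elim 0 1) := by
  induction h : n - S.card generalizing S with
  | zero => exact hbase S hS (by lia)
  | succ k ih =>
    refine isHyperbolicAt_indepHessian_of_insert hn (by lia) fun i hi hind ↦ ?_
    have hcard := Finset.card_insert_of_notMem hi
    exact ih (by rwa [Finset.coe_insert]) (by lia) (by lia)

theorem indepHessian_mulVec_eq_zero (hn : ((n + 2 : ℕ) : ℕ∞) ≤ M.eRank)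
    (hbase : ∀ S : Finset α, M.Indep S → S.card = n →
      IsHyperbolicAt (indepHessian M w n S) (Sum.elim 0 1))
    {v : Unit ⊕ α → ℝ} (hv : indepHessian M w n ∅ *ᵥ v = 0)
    (hS : M.Indep (S : Set α)) (hSn : S.card ≤ n) : indepHessian M w n S *ᵥ v = 0 := by
  induction S using Finset.induction_on with
  | empty => exact hv
  | insert i S hi ih =>
    rw [Finset.card_insert_of_notMem hi] at hSn
    have hSv := ih (hS.subset (Finset.coe_subset.2 (Finset.subset_insert i S))) (by lia)
    have horth {j} (hj : j ∉ S) :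
        Sum.elim (0 : Unit → ℝ) 1 ⬝ᵥ indepHessian M w n (insert j S) *ᵥ v = 0 := by
      rw [dotProduct_indepHessian_insert_mulVec hj, hSv, Pi.zero_apply, mul_zero]
    have hnonpos (j) (hj : j ∈ Sᶜ) : v ⬝ᵥ indepHessian M w n (insert j S) *ᵥ v ≤ 0 := by
      have hjS := Finset.mem_compl.1 hj
      by_cases hind : M.Indep ((insert j S : Finset α) : Set α)
      · have hcard : (insert j S).card ≤ n := by rw [Finset.card_insert_of_notMem hjS]; lia
        have h := isHyperbolicAt_indepHessian hn hbase hind hcard v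
        rw [horth hjS, zero_pow two_ne_zero] at h
        exact nonpos_of_mul_nonpos_left h (dotProduct_indepHessian_mulVec_pos hn hind hcard)
      · rw [indepHessian_eq_zero_of_not_indep hind, Matrix.zero_mulVec, dotProduct_zero]
    have hsum := mul_dotProduct_indepHessian_mulVec (M := M) (w := w) (n := n) (S := S) v
    rw [hSv, dotProduct_zero, mul_zero, eq_comm, Finset.sum_eq_zero_iff_of_nonpos hnonpos] at hsum
    have hcard : (insert i S).card ≤ n := by rwa [Finset.card_insert_of_notMem hi]
    exact (isHyperbolicAt_indepHessian hn hbase hS hcard).mulVec_eq_zero indepHessian_isSymm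
      (dotProduct_indepHessian_mulVec_pos hn hS hcard) (horth hi)
      (hsum i (Finset.mem_compl.2 hi))

end Hessian

section ParallelClasses

open scoped Matrix

variable {α κ : Type*} {M : Matroid α} {c : α → κ} {w : ℝ} {n : ℕ}

/-- `c` is constant exactly on the parallel classes of the contraction of `M` by `S`: the nonloops
of this contraction are the elements of `M.E \ M.closure S`. -/
def IsParallelColoring (M : Matroid α) (S : Set α) (c : α → κ) : Prop :=
  ∀ i ∈ M.E \ M.closure S, ∀ j ∈ M.E \ M.closure S, j ∈ M.closure (insert i S) ↔ c i = c j

/-- The form that `indepHessian` induces on the parallel classes of a contraction of rank two. -/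
def colorForm (κ : Type*) (w : ℝ) : Matrix (Unit ⊕ κ) (Unit ⊕ κ) ℝ :=
  Matrix.fromBlocks (Matrix.of fun _ _ ↦ w) (Matrix.of fun _ _ ↦ 1) (Matrix.of fun _ _ ↦ 1)
    (Matrix.of fun k l ↦ if k = l then 0 else 1)

/-- The linear map that sums the coordinates of a vector over the colour classes of the nonloops
of the contraction of `M` by `S`. -/
def colorSum (M : Matroid α) (S : Set α) (c : α → κ) : Matrix (Unit ⊕ κ) (Unit ⊕ α) ℝ :=
  Matrix.fromBlocks 1 0 0 (Matrix.of fun k i ↦ if i ∈ M.E \ M.closure S ∧ c i = k then 1 else 0)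

theorem colorForm_isSymm : (colorForm κ w).IsSymm :=
  Matrix.IsSymm.fromBlocks rfl rfl (Matrix.IsSymm.ext fun k l ↦ by simp [eq_comm])

section Form

variable [Fintype κ]

theorem colorForm_mulVec (x : ℝ) (a : κ → ℝ) : colorForm κ w *ᵥ Sum.elim (fun _ ↦ x) a =
    Sum.elim (fun _ ↦ w * x + ∑ k, a k) (fun k ↦ x + ∑ l, a l - a k) := by
  have hdiag (k l : κ) : (if k = l then 0 else a l) = a l - if k = l then a l else 0 := by
    split_ifs <;> simp
  funext k
  rcases k with _ | k
  · simp [colorForm, Matrix.mulVec, dotProduct]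
  · simp [colorForm, Matrix.mulVec, dotProduct, hdiag, Finset.sum_sub_distrib, add_sub_assoc]

theorem dotProduct_colorForm_mulVec (x : ℝ) (a : κ → ℝ) :
    Sum.elim (fun _ : Unit ↦ x) a ⬝ᵥ colorForm κ w *ᵥ Sum.elim (fun _ ↦ x) a =
      w * x ^ 2 + 2 * x * ∑ k, a k + (∑ k, a k) ^ 2 - ∑ k, a k ^ 2 := by
  rw [colorForm_mulVec, sumElim_dotProduct_sumElim]
  simp only [dotProduct, Finset.univ_unique, Finset.sum_singleton, mul_sub, mul_add,
    Finset.sum_sub_distrib, Finset.sum_add_distrib, ← Finset.sum_mul, ← sq]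
  ring

theorem isHyperbolicAt_colorForm [Nonempty κ]
    (hw : w * (Fintype.card κ - 1) = Fintype.card κ) {a : κ → ℝ} (ha : 0 ≤ a) :
    IsHyperbolicAt (colorForm κ w) (Sum.elim (fun _ ↦ 0) a) := by
  have hp : (0 : ℝ) < Fintype.card κ := Nat.cast_pos.2 Fintype.card_pos
  refine .of_nonpos_on_hyperplane (l := Sum.elim (fun _ ↦ w) 1) colorForm_isSymm (fun v hv ↦ ?_) ?_
  · obtain ⟨x, b, rfl⟩ : ∃ x b, v = Sum.elim (fun _ ↦ x) b :=
      ⟨v (.inl ()), v ∘ .inr, (Sum.elim_comp_inl_inr v).symm⟩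
    rw [sumElim_dotProduct_sumElim, one_dotProduct] at hv
    simp only [dotProduct, Finset.univ_unique, Finset.sum_singleton] at hv
    have hcs := sq_sum_le_card_mul_sum_sq (s := Finset.univ) (f := b)
    rw [Finset.card_univ] at hcs
    have hsum : Fintype.card κ * (w * x ^ 2 + 2 * x * ∑ k, b k + (∑ k, b k) ^ 2) =
        (∑ k, b k) ^ 2 := by
      linear_combination (Fintype.card κ * x + (Fintype.card κ - 1) * ∑ k, b k) * hv -
        x * (∑ k, b k) * hw
    rw [dotProduct_colorForm_mulVec]
    refine nonpos_of_mul_nonpos_right ?_ hp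
    linarith
  · rw [dotProduct_colorForm_mulVec]
    have := Finset.sum_sq_le_sq_sum_of_nonneg (s := Finset.univ) fun k _ ↦ ha k
    linarith

theorem colorSum_transpose_mulVec (S : Set α) (x : ℝ) (a : κ → ℝ) :
    (colorSum M S c)ᵀ *ᵥ Sum.elim (fun _ ↦ x) a =
      Sum.elim (fun _ ↦ x) (fun i ↦ if i ∈ M.E \ M.closure S then a (c i) else 0) := by
  funext i
  rcases i with _ | i
  · simp [colorSum, Matrix.mulVec, dotProduct]
  · by_cases hi : i ∈ M.E \ M.closure S <;>
      simp [colorSum, Matrix.mulVec, dotProduct, hi, -Set.mem_sdiff]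

end Form

variable [Fintype α] {S : Finset α}

theorem numIndepOver_singleton_of_card (hS : M.Indep (S : Set α)) (hSn : S.card = n) (i : α) :
    numIndepOver M (n + 1) S {i} = if i ∈ M.E \ M.closure S then 1 else 0 := by
  by_cases hi : i ∈ S
  · rw [numIndepOver_eq_zero_of_mem hi (Finset.mem_singleton_self i),
      if_neg fun h ↦ h.2 (M.subset_closure S hS.subset_ground hi)]
  · rw [numIndepOver_of_card_add (Finset.disjoint_singleton_right.2 hi)
      (by rw [Finset.card_singleton, hSn]), Finset.coe_singleton, Set.union_singleton]
    simp only [hS.insert_indep_iff_of_notMem (Finset.mem_coe.not.2 hi)]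

theorem numIndepOver_pair_of_card (hS : M.Indep (S : Set α)) (hSn : S.card = n)
    (hc : IsParallelColoring M S c) (i j : α) :
    (if i = j then 0 else numIndepOver M (n + 2) S {i, j}) =
      if i ∈ M.E \ M.closure S ∧ j ∈ M.E \ M.closure S ∧ c i ≠ c j then 1 else 0 := by
  rcases eq_or_ne i j with rfl | hij
  · simp
  rw [if_neg hij]
  by_cases hiS : i ∈ S
  · rw [numIndepOver_eq_zero_of_mem hiS (Finset.mem_insert_self i _),
      if_neg fun h ↦ h.1.2 (M.subset_closure S hS.subset_ground hiS)]
  have hinsert := numIndepOver_insert_left (M := M) (k := n + 2) (T := {j}) hiS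
  rw [if_neg (by simpa using hij)] at hinsert
  rw [← hinsert]
  have hi := hS.insert_indep_iff_of_notMem (Finset.mem_coe.not.2 hiS)
  rw [← Finset.coe_insert] at hi
  by_cases hiE : i ∈ M.E \ M.closure S
  · have hj : j ∈ M.E \ M.closure (insert i S) ↔ j ∈ M.E \ M.closure S ∧ c i ≠ c j := by
      have hmono := M.closure_subset_closure (Set.subset_insert i (S : Set α))
      refine ⟨fun h ↦ ?_, fun h ↦ ⟨h.1.1, (hc i hiE j h.1).not.2 h.2⟩⟩
      have hjE : j ∈ M.E \ M.closure S := ⟨h.1, fun hj ↦ h.2 (hmono hj)⟩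
      exact ⟨hjE, (hc i hiE j hjE).not.1 h.2⟩
    rw [numIndepOver_singleton_of_card (hi.2 hiE)
      (by rw [Finset.card_insert_of_notMem hiS, hSn]), Finset.coe_insert]
    simp only [hj, hiE, true_and]
  · rw [numIndepOver_eq_zero_of_not_indep (hi.not.2 hiE), if_neg fun h ↦ hiE h.1]

theorem colorSum_mulVec (S : Set α) (x y : ℝ) :
    colorSum M S c *ᵥ Sum.elim (fun _ ↦ x) (fun _ ↦ y) =
      Sum.elim (fun _ ↦ x) (fun k ↦ y * {i ∈ M.E \ M.closure S | c i = k}.ncard) := by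
  have hcount (k) : {i ∈ M.E \ M.closure S | c i = k}.ncard =
      Finset.card {i | i ∈ M.E \ M.closure S ∧ c i = k} := by
    rw [← Set.ncard_coe_finset, Finset.coe_filter]
    simp only [Finset.mem_univ, true_and]
  funext k
  rcases k with _ | k
  · simp [colorSum, Matrix.mulVec, dotProduct]
  · simp only [hcount, Sum.elim_inr]
    simp [colorSum, Matrix.mulVec, dotProduct, -Set.mem_sdiff, ← Finset.sum_filter, mul_comm]

variable [Fintype κ]

theorem indepHessian_eq_colorSum (hS : M.Indep (S : Set α)) (hSn : S.card = n)
    (hc : IsParallelColoring M S c) :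
    indepHessian M w n S = (colorSum M S c)ᵀ * colorForm κ w * colorSum M S c := by
  have hempty : numIndepOver M n S ∅ = 1 := by
    rw [numIndepOver_of_card_add (Finset.disjoint_empty_right S) (by simpa using hSn),
      Finset.coe_empty, Set.union_empty, if_pos hS]
  ext (i | i) (j | j)
  · simp [indepHessian, colorSum, colorForm, Matrix.mul_apply, hempty]
  · by_cases hj : j ∈ M.E \ M.closure S <;>
      simp [indepHessian, colorSum, colorForm, Matrix.mul_apply,
        numIndepOver_singleton_of_card hS hSn, hj, -Set.mem_sdiff]
  · by_cases hi : i ∈ M.E \ M.closure S <;>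
      simp [indepHessian, colorSum, colorForm, Matrix.mul_apply,
        numIndepOver_singleton_of_card hS hSn, hi, -Set.mem_sdiff]
  · by_cases hi : i ∈ M.E \ M.closure S <;> by_cases hj : j ∈ M.E \ M.closure S <;>
      simp [indepHessian, colorSum, colorForm, Matrix.mul_apply,
        numIndepOver_pair_of_card hS hSn hc, hi, hj, -Set.mem_sdiff]

theorem isHyperbolicAt_indepHessian_of_isParallelColoring [Nonempty κ]
    (hw : w * (Fintype.card κ - 1) = Fintype.card κ) (hS : M.Indep (S : Set α)) (hSn : S.card = n)
    (hc : IsParallelColoring M S c) : IsHyperbolicAt (indepHessian M w n S) (Sum.elim 0 1) := by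
  rw [indepHessian_eq_colorSum hS hSn hc]
  refine .congruence ?_
  have h := colorSum_mulVec (M := M) (c := c) S 0 1
  change colorSum M S c *ᵥ Sum.elim 0 1 = _ at h
  rw [h]
  exact isHyperbolicAt_colorForm hw fun k ↦ by positivity

theorem mul_ncard_color_eq_of_indepHessian_mulVec_eq_zero [Nonempty κ]
    (hw : w * (Fintype.card κ - 1) = Fintype.card κ) (hS : M.Indep (S : Set α)) (hSn : S.card = n)
    (hc : IsParallelColoring M S c) {x : ℝ}
    (hv : indepHessian M w n S *ᵥ Sum.elim (fun _ ↦ 1) (fun _ ↦ -x) = 0) (k : κ) :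
    x * {i ∈ M.E \ M.closure S | c i = k}.ncard = w - 1 := by
  have hp : (1 : ℝ) ≤ Fintype.card κ := Nat.one_le_cast.2 Fintype.card_pos
  have hwpos : 0 < w := by nlinarith
  have hwp : Fintype.card κ * (w - 1) = w := by linarith
  set m : κ → ℝ := fun k ↦ ({i ∈ M.E \ M.closure S | c i = k}.ncard : ℝ) with hm
  rw [indepHessian_eq_colorSum hS hSn hc, ← Matrix.mulVec_mulVec, ← Matrix.mulVec_mulVec,
    colorSum_mulVec, colorForm_mulVec, colorSum_transpose_mulVec, ← Finset.mul_sum] at hv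
  have htotal : x * ∑ l, m l = w := by
    have h := congrFun hv (.inl ())
    simp only [Sum.elim_inl, Pi.zero_apply] at h
    linarith
  have hle (l : κ) : x * m l ≤ w - 1 := by
    rcases {i ∈ M.E \ M.closure S | c i = l}.eq_empty_or_nonempty with hl | ⟨i, hi, rfl⟩
    · simp only [hm, hl, Set.ncard_empty, Nat.cast_zero, mul_zero]
      nlinarith
    · have h := congrFun hv (.inr i)
      simp only [Sum.elim_inr, if_pos hi, Pi.zero_apply] at h
      linarith
  have hsum : ∑ l, (w - 1 - x * m l) = 0 := by
    rw [Finset.sum_sub_distrib, ← Finset.mul_sum, htotal, Finset.sum_const, Finset.card_univ,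
      nsmul_eq_mul, hwp, sub_self]
  have h := (Finset.sum_eq_zero_iff_of_nonneg fun l _ ↦ sub_nonneg.2 (hle l)).1 hsum k
    (Finset.mem_univ k)
  linarith

end ParallelClasses

section UltraLogConcavity

open scoped Matrix

variable {α κ : Type*} {M : Matroid α} {w : ℝ} {n : ℕ}

section Entries

variable [Fintype α]

theorem dotProduct_indepHessian_empty_mulVec_inl_inl :
    Sum.elim (1 : Unit → ℝ) 0 ⬝ᵥ indepHessian M w n ∅ *ᵥ Sum.elim (1 : Unit → ℝ) 0 =
      w * numIndep M n := by
  simp [indepHessian, dotProduct, Matrix.mulVec, numIndepOver_empty]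

theorem dotProduct_indepHessian_empty_mulVec_inr_inl :
    Sum.elim (0 : Unit → ℝ) 1 ⬝ᵥ indepHessian M w n ∅ *ᵥ Sum.elim (1 : Unit → ℝ) 0 =
      (n + 1) * numIndep M (n + 1) := by
  rw [dotProduct_mulVec_comm_of_isSymm indepHessian_isSymm]
  simp [dotProduct, indepHessian_mulVec_inl, numIndepOver_empty]

theorem dotProduct_indepHessian_empty_mulVec_inr_inr :
    Sum.elim (0 : Unit → ℝ) 1 ⬝ᵥ indepHessian M w n ∅ *ᵥ Sum.elim (0 : Unit → ℝ) 1 =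
      (n + 2) * (n + 1) * numIndep M (n + 2) := by
  rw [dotProduct_indepHessian_mulVec, Finset.card_empty, numIndepOver_empty]
  simp only [Nat.cast_zero, sub_zero]

end Entries

theorem isHyperbolicAt_indepHessian_of_exists_isParallelColoring [Fintype α] [Fintype κ]
    [Nonempty κ] (hw : w * (Fintype.card κ - 1) = Fintype.card κ)
    (hc : ∀ S : Finset α, M.Indep S → S.card = n → ∃ c : α → κ, IsParallelColoring M S c)
    (S : Finset α) (hS : M.Indep (S : Set α)) (hSn : S.card = n) :
    IsHyperbolicAt (indepHessian M w n S) (Sum.elim 0 1) :=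
  have ⟨_, hcS⟩ := hc S hS hSn
  isHyperbolicAt_indepHessian_of_isParallelColoring hw hS hSn hcS

theorem mul_numIndep_mul_numIndep_le [Finite α] [Fintype κ] [Nonempty κ]
    (hw : w * (Fintype.card κ - 1) = Fintype.card κ) (hn : ((n + 2 : ℕ) : ℕ∞) ≤ M.eRank)
    (hc : ∀ S : Finset α, M.Indep S → S.card = n → ∃ c : α → κ, IsParallelColoring M S c) :
    w * (n + 2) * (numIndep M n * numIndep M (n + 2)) ≤ (n + 1) * (numIndep M (n + 1) : ℝ) ^ 2 := by
  have := Fintype.ofFinite α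
  have hbase := isHyperbolicAt_indepHessian_of_exists_isParallelColoring hw hc
  have h := isHyperbolicAt_indepHessian (S := ∅) hn hbase (by simp) (Nat.zero_le n)
    (Sum.elim 1 0)
  rw [dotProduct_indepHessian_empty_mulVec_inl_inl, dotProduct_indepHessian_empty_mulVec_inr_inl,
    dotProduct_indepHessian_empty_mulVec_inr_inr] at h
  refine le_of_mul_le_mul_left ?_ (Nat.cast_add_one_pos (α := ℝ) n)
  linarith

theorem exists_mul_ncard_color_eq_of_numIndep_eq [Finite α] [Fintype κ] [Nonempty κ]
    (hw : w * (Fintype.card κ - 1) = Fintype.card κ) (hn : ((n + 2 : ℕ) : ℕ∞) ≤ M.eRank)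
    (hc : ∀ S : Finset α, M.Indep S → S.card = n → ∃ c : α → κ, IsParallelColoring M S c)
    (heq : w * (n + 2) * (numIndep M n * numIndep M (n + 2)) =
      (n + 1) * (numIndep M (n + 1) : ℝ) ^ 2) :
    ∃ x : ℝ, ∀ S : Finset α, M.Indep S → S.card = n → ∀ c : α → κ, IsParallelColoring M S c →
      ∀ k, x * {i ∈ M.E \ M.closure S | c i = k}.ncard = w - 1 := by
  have := Fintype.ofFinite α
  have hbase := isHyperbolicAt_indepHessian_of_exists_isParallelColoring hw hc
  have hhyp := isHyperbolicAt_indepHessian (S := ∅) hn hbase (by simp) (Nat.zero_le n)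
  have hpos := dotProduct_indepHessian_mulVec_pos (M := M) (w := w) (S := ∅) hn (by simp)
    (Nat.zero_le n)
  have hprop := hhyp.smul_mulVec_eq indepHessian_isSymm (u := Sum.elim 1 0)
    (by
      rw [dotProduct_indepHessian_empty_mulVec_inl_inl,
        dotProduct_indepHessian_empty_mulVec_inr_inl, dotProduct_indepHessian_empty_mulVec_inr_inr]
      linear_combination (n + 1 : ℝ) * heq)
  set d := Sum.elim (0 : Unit → ℝ) 1 ⬝ᵥ indepHessian M w n ∅ *ᵥ Sum.elim (0 : Unit → ℝ) 1
  set b := Sum.elim (0 : Unit → ℝ) 1 ⬝ᵥ indepHessian M w n ∅ *ᵥ Sum.elim (1 : Unit → ℝ) 0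
  refine ⟨b / d, fun S hS hSn c hcS k ↦
    mul_ncard_color_eq_of_indepHessian_mulVec_eq_zero hw hS hSn hcS
      (indepHessian_mulVec_eq_zero hn hbase ?_ hS hSn.le) k⟩
  have hv : Sum.elim (fun _ : Unit ↦ (1 : ℝ)) (fun _ : α ↦ -(b / d)) =
      Sum.elim (1 : Unit → ℝ) 0 - (b / d) • Sum.elim (0 : Unit → ℝ) 1 := by
    ext (i | i) <;> simp
  rw [hv, Matrix.mulVec_sub, Matrix.mulVec_smul, sub_eq_zero, div_eq_inv_mul, mul_smul, ← hprop,
    inv_smul_smul₀ hpos.ne']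

end UltraLogConcavity

section Circuit

variable {α : Type*} {M : Matroid α} {B : Set α} {e f : α}

theorem exists_mem_notMem_closure_diff (hB : M.IsBase B) (hf : M.IsNonloop f) :
    ∃ e ∈ B, f ∉ M.closure (B \ {e}) := by
  by_cases hfB : f ∈ B
  · exact ⟨f, hfB, hB.indep.notMem_closure_sdiff_of_mem hfB⟩
  obtain ⟨B', hB', hfB', hB'B⟩ := hf.indep.exists_isBase_subset_union_isBase hB
  have hne : ¬ B ⊆ B' := fun h ↦
    hfB (hB.eq_of_subset_isBase hB' h ▸ Set.singleton_subset_iff.1 hfB')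
  obtain ⟨e, heB, heB'⟩ := Set.not_subset.1 hne
  refine ⟨e, heB, fun hfe ↦ hB.indep.notMem_closure_sdiff_of_mem heB ?_⟩
  have hsub : B' ⊆ M.closure (B \ {e}) := fun x hx ↦ by
    rcases hB'B hx with rfl | hxB
    · exact hfe
    · exact M.mem_closure_of_mem' ⟨hxB, fun h ↦ heB' (h ▸ hx)⟩ (hB.subset_ground hxB)
  have := M.closure_subset_closure_of_subset_closure hsub
  rw [hB'.closure_eq] at this
  exact this (hB.subset_ground heB)

theorem encard_diff_pair_add_two {e' : α} (hB : M.IsBase B) (he : e ∈ B) (he' : e' ∈ B)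
    (hne : e ≠ e') : (B \ {e, e'}).encard + 2 = M.eRank := by
  rw [← hB.encard_eq_eRank, ← Set.encard_pair hne]
  exact Set.encard_sdiff_add_encard_of_subset (Set.pair_subset he he')

theorem notMem_closure_diff_pair {e' : α} (hB : M.IsBase B) (he : e ∈ B) :
    e ∉ M.closure (B \ {e, e'}) := fun h ↦
  hB.indep.notMem_closure_sdiff_of_mem he <| M.closure_subset_closure
    (Set.sdiff_subset_sdiff_right (Set.singleton_subset_iff.2 (Set.mem_insert e _))) h

theorem notMem_closure_diff_of_pairwise_notMem_closure [M.Loopless]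
    (h : ∀ S, M.Indep S → S.encard + 2 = M.eRank →
      (M.E \ M.closure S).Pairwise fun i j ↦ j ∉ M.closure (insert i S))
    (hB : M.IsBase B) (he : e ∈ B) (hfE : f ∈ M.E) (hfB : f ∉ B) : f ∉ M.closure (B \ {e}) := by
  obtain ⟨e', he', hfe'⟩ := exists_mem_notMem_closure_diff hB (M.isNonloop_of_loopless hfE)
  rcases eq_or_ne e' e with rfl | hne
  · exact hfe'
  have hfS : f ∉ M.closure (B \ {e', e}) := fun hf ↦ hfe' <| M.closure_subset_closure
    (Set.sdiff_subset_sdiff_right (Set.singleton_subset_iff.2 (Set.mem_insert e' _))) hf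
  have hpar : f ∉ M.closure (insert e' (B \ {e', e})) := h _
    (hB.indep.subset Set.sdiff_subset) (encard_diff_pair_add_two hB he' he hne)
    ⟨hB.subset_ground he', notMem_closure_diff_pair hB he'⟩ ⟨hfE, hfS⟩
    (ne_of_mem_of_not_mem he' hfB)
  rwa [show insert e' (B \ {e', e}) = B \ {e} by grind] at hpar

theorem isCircuit_ground_of_rank_two_contractions [M.Loopless] (hrank : 2 ≤ M.eRank)
    (hcard : ∀ S, M.Indep S → S.encard + 2 = M.eRank → (M.E \ M.closure S).encard = 3)
    (hpar : ∀ S, M.Indep S → S.encard + 2 = M.eRank →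
      (M.E \ M.closure S).Pairwise fun i j ↦ j ∉ M.closure (insert i S)) :
    M.IsCircuit M.E := by
  obtain ⟨B, hB⟩ := M.exists_isBase
  have hexch {e f} (he : e ∈ B) (hf : f ∈ M.E \ B) : f ∉ M.closure (B \ {e}) :=
    notMem_closure_diff_of_pairwise_notMem_closure hpar hB he hf.1 hf.2
  obtain ⟨e, e', he, he', hne⟩ : ∃ e e', e ∈ B ∧ e' ∈ B ∧ e ≠ e' := by
    rw [← Set.one_lt_encard_iff, hB.encard_eq_eRank]
    exact lt_of_lt_of_le (by norm_num) hrank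
  have hout : M.E \ M.closure (B \ {e, e'}) = {e, e'} ∪ M.E \ B := by
    refine Set.Subset.antisymm (fun x hx ↦ ?_) (Set.union_subset (Set.pair_subset ?_ ?_) ?_)
    · by_contra h
      rw [Set.mem_union, not_or] at h
      exact hx.2 (M.mem_closure_of_mem' ⟨by_contra fun hxB ↦ h.2 ⟨hx.1, hxB⟩, h.1⟩ hx.1)
    · exact ⟨hB.subset_ground he, notMem_closure_diff_pair hB he⟩
    · exact ⟨hB.subset_ground he', Set.pair_comm e e' ▸ notMem_closure_diff_pair hB he'⟩
    · exact fun f hf ↦ ⟨hf.1, fun h ↦ hexch he hf (M.closure_subset_closure (by grind) h)⟩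
  have hone : (M.E \ B).encard = 1 := by
    have h := hcard _ (hB.indep.subset Set.sdiff_subset) (encard_diff_pair_add_two hB he he' hne)
    rw [hout, Set.encard_union_eq (by grind), Set.encard_pair hne] at h
    exact ENat.add_right_injective_of_ne_top (ENat.natCast_ne_top 2)
      (h.trans two_add_one_eq_three.symm)
  obtain ⟨f, hf⟩ := Set.encard_eq_one.1 hone
  have hfE : f ∈ M.E \ B := hf.ge rfl
  have hE : M.E = insert f B :=
    (Set.sdiff_union_of_subset hB.subset_ground).symm.trans (by rw [hf, Set.singleton_union])
  refine Matroid.isCircuit_iff_dep_forall_sdiff_singleton_indep.2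
    ⟨⟨fun h ↦ hfE.2 (hB.eq_of_subset_indep h hB.subset_ground ▸ hfE.1), Set.Subset.rfl⟩,
      fun x hx ↦ ?_⟩
  rcases hE ▸ hx with rfl | hxB
  · rw [hE, Set.insert_sdiff_self_of_notMem hfE.2]
    exact hB.indep
  · have hfx := ((hB.indep.subset Set.sdiff_subset).notMem_closure_iff hfE.1).1 (hexch hxB hfE)
    rw [hE, Set.insert_sdiff_of_notMem _
      (Set.notMem_singleton_iff.2 (ne_of_mem_of_not_mem hxB hfE.2).symm)]
    exact hfx.1

theorem bijOn_univ_of_ncard_fiber_eq_one {κ : Type*} {s : Set α} {c : α → κ}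
    (h : ∀ k, {i ∈ s | c i = k}.ncard = 1) : Set.BijOn c s Set.univ := by
  refine ⟨Set.mapsTo_univ _ _, fun i hi j hj hij ↦ ?_, fun k _ ↦ ?_⟩
  · obtain ⟨a, ha⟩ := Set.ncard_eq_one.1 (h (c j))
    exact (ha.le ⟨hi, hij⟩ : i = a).trans (ha.le ⟨hj, rfl⟩ : j = a).symm
  · obtain ⟨a, ha⟩ := Set.ncard_eq_one.1 (h k)
    exact ⟨a, ha.ge rfl⟩

theorem isCircuit_ground_of_ncard_color_eq_one [M.Loopless] {n : ℕ} (hrank : M.eRank = n + 2)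
    (h : ∀ S : Finset α, M.Indep S → S.card = n → ∃ c : α → Fin 3, IsParallelColoring M S c ∧
      ∀ k, {i ∈ M.E \ M.closure S | c i = k}.ncard = 1) : M.IsCircuit M.E := by
  have hcolor (S : Set α) (hS : M.Indep S) (hcard : S.encard + 2 = M.eRank) :
      ∃ c : α → Fin 3, IsParallelColoring M S c ∧
        Set.BijOn c (M.E \ M.closure S) Set.univ := by
    rw [hrank] at hcard
    have hSn : S.encard = n := ENat.add_left_injective_of_ne_top (ENat.natCast_ne_top 2) hcard
    lift S to Finset α using Set.finite_of_encard_eq_coe hSn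
    obtain ⟨c, hc, hone⟩ := h S hS (by exact_mod_cast Set.encard_coe_eq_coe_finsetCard S ▸ hSn)
    exact ⟨c, hc, bijOn_univ_of_ncard_fiber_eq_one hone⟩
  refine isCircuit_ground_of_rank_two_contractions (hrank ▸ le_add_self) (fun S hS hcard ↦ ?_)
    fun S hS hcard i hi j hj hij hmem ↦ ?_
  · obtain ⟨c, -, hbij⟩ := hcolor S hS hcard
    rw [← hbij.injOn.encard_image, hbij.image_eq, Set.encard_univ,
      ENat.card_eq_coe_fintype_card, Fintype.card_fin]
    rfl
  · obtain ⟨c, hc, hbij⟩ := hcolor S hS hcard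
    exact hij (hbij.injOn hi hj ((hc i hi j hj).1 hmem))

theorem numIndep_eq_choose_of_isCircuit_ground {k : ℕ} (hM : M.IsCircuit M.E)
    (hk : k < M.E.ncard) : numIndep M k = M.E.ncard.choose k := by
  obtain ⟨E, hE⟩ := (Set.finite_of_ncard_pos (Nat.zero_lt_of_lt hk)).exists_finset_coe
  rw [← hE, Set.ncard_coe_finset] at hk ⊢
  rw [numIndep, ← Finset.card_powersetCard, ← Set.ncard_coe_finset]
  refine congrArg Set.ncard (Set.ext fun B ↦ ?_)
  rw [Set.mem_ofPred_eq, Finset.mem_coe, Finset.mem_powersetCard, ← Finset.coe_subset, hE]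
  refine and_congr_left fun hB ↦ ⟨Matroid.Indep.subset_ground, fun hBE ↦ ?_⟩
  refine hM.ssubset_indep (hBE.ssubset_of_ne fun h ↦ hk.ne ?_)
  rw [← hB, Finset.coe_injective (h.trans hE.symm)]

theorem choose_mul_choose_mul_eq_choose_sq_mul (m k : ℕ) :
    m.choose k * m.choose (k + 2) * ((m - k) * (k + 2)) =
      m.choose (k + 1) ^ 2 * ((k + 1) * (m - (k + 1))) := by
  linear_combination m.choose (k + 2) * (k + 2) * (m.choose_succ_right_eq k).symm +
    m.choose (k + 1) * (k + 1) * m.choose_succ_right_eq (k + 1)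

end Circuit

section GraphicMatroid

open SimpleGraph

variable {V : Type*} {G H : SimpleGraph V} {F : Set (Sym2 V)} {u v x y : V}

theorem fromEdgeSet_insert_eq_sup_edge (F : Set (Sym2 V)) (u v : V) :
    fromEdgeSet (insert s(u, v) F) = fromEdgeSet F ⊔ edge u v := by
  rw [Set.insert_eq, Set.union_comm, fromEdgeSet_union, edge]

theorem reachable_sup_edge_iff : (H ⊔ edge u v).Reachable x y ↔
    H.Reachable x y ∨ H.Reachable x u ∧ H.Reachable v y ∨ H.Reachable x v ∧ H.Reachable u y := by
  have hle : H ≤ H ⊔ edge u v := le_sup_left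
  constructor
  · rintro ⟨p⟩
    induction p with
    | nil => exact Or.inl .rfl
    | cons hadj _ ih =>
      rw [sup_adj, edge_adj] at hadj
      rcases hadj with hadj | ⟨⟨rfl, rfl⟩ | ⟨rfl, rfl⟩, -⟩
      · have := hadj.reachable
        exact ih.imp this.trans (Or.imp (And.imp_left this.trans) (And.imp_left this.trans))
      · rcases ih with h | ⟨-, h⟩ | ⟨-, h⟩
        exacts [.inr (.inl ⟨.rfl, h⟩), .inr (.inl ⟨.rfl, h⟩), .inl h]
      · rcases ih with h | ⟨-, h⟩ | ⟨-, h⟩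
        exacts [.inr (.inr ⟨.rfl, h⟩), .inl h, .inr (.inr ⟨.rfl, h⟩)]
  · have huv : (H ⊔ edge u v).Reachable u v := by
      rcases eq_or_ne u v with rfl | hne
      · exact .rfl
      · exact Adj.reachable (Or.inr ((edge_adj ..).2 ⟨.inl ⟨rfl, rfl⟩, hne⟩))
    rintro (h | ⟨h, h'⟩ | ⟨h, h'⟩)
    · exact h.mono hle
    · exact (h.mono hle).trans (huv.trans (h'.mono hle))
    · exact (h.mono hle).trans (huv.symm.trans (h'.mono hle))

theorem reachable_fromEdgeSet_of_mem (h : s(u, v) ∈ F) : (fromEdgeSet F).Reachable u v := by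
  rcases eq_or_ne u v with rfl | hne
  · exact .rfl
  · exact Adj.reachable ((fromEdgeSet_adj F).2 ⟨h, hne⟩)

/-- `IsForestSet G F` says that `F` is the edge set of a forest contained in `G`; these are the
independent sets of the graphic matroid of `G`. -/
def IsForestSet (G : SimpleGraph V) (F : Set (Sym2 V)) : Prop :=
  F ⊆ G.edgeSet ∧ (fromEdgeSet F).IsAcyclic

theorem isForestSet_empty : IsForestSet G ∅ :=
  ⟨Set.empty_subset _, by simp only [fromEdgeSet_empty, isAcyclic_bot]⟩

theorem IsForestSet.subset {F' : Set (Sym2 V)} (hF' : IsForestSet G F') (h : F ⊆ F') :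
    IsForestSet G F :=
  ⟨h.trans hF'.1, hF'.2.anti (fromEdgeSet_mono h)⟩

theorem IsForestSet.insert_iff (hF : IsForestSet G F) (he : s(u, v) ∈ G.edgeSet)
    (heF : s(u, v) ∉ F) :
    IsForestSet G (insert s(u, v) F) ↔ ¬ (fromEdgeSet F).Reachable u v := by
  rw [IsForestSet, fromEdgeSet_insert_eq_sup_edge, isAcyclic_sup_fromEdgeSet_iff]
  simp only [Set.insert_subset he hF.1, hF.2, fromEdgeSet_adj, heF, false_and, or_false,
    G.ne_of_adj he, imp_false, true_and]

theorem isForestSet_of_forall_finite (h : ∀ J ⊆ F, J.Finite → IsForestSet G J) :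
    IsForestSet G F := by
  refine ⟨fun e he ↦ (h {e} (Set.singleton_subset_iff.2 he) (Set.finite_singleton e)).1 rfl,
    fun v p hp ↦ ?_⟩
  have hpF {e} (he : e ∈ p.edges) : e ∈ F \ Sym2.diagSet := by
    simpa only [edgeSet_fromEdgeSet] using p.edges_subset_edgeSet he
  refine (h {e | e ∈ p.edges} (fun e he ↦ (hpF he).1) (List.finite_toSet _)).2 _
    (hp.transfer fun e he ↦ ?_)
  rw [edgeSet_fromEdgeSet]
  exact ⟨he, (hpF he).2⟩

theorem reachable_of_reachable_fromEdgeSet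
    (hF : ∀ u v, s(u, v) ∈ F → H.Reachable u v) (h : (fromEdgeSet F).Reachable x y) :
    H.Reachable x y := by
  obtain ⟨p⟩ := h
  induction p with
  | nil => exact .rfl
  | cons hadj _ ih => exact (hF _ _ ((fromEdgeSet_adj F).1 hadj).1).trans ih

theorem IsForestSet.exists_insert_of_not_maximal {I B : Set (Sym2 V)} (hI : IsForestSet G I)
    (hImax : ¬ Maximal (IsForestSet G) I) (hB : Maximal (IsForestSet G) B) :
    ∃ e ∈ B \ I, IsForestSet G (insert e I) := by
  by_contra! hno
  obtain ⟨J, hIJ, hJ⟩ := exists_gt_of_not_maximal hI hImax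
  obtain ⟨e, heJ, heI⟩ := Set.exists_of_ssubset hIJ
  induction e with | h u v
  have he := hJ.1 heJ
  have hnI : ¬ (fromEdgeSet I).Reachable u v :=
    (hI.insert_iff he heI).1 (hJ.subset (Set.insert_subset heJ hIJ.subset))
  have hnB : ¬ (fromEdgeSet B).Reachable u v := fun h ↦ hnI <|
    reachable_of_reachable_fromEdgeSet (fun x y hxy ↦ by_contra fun hn ↦
      have hxyI := mt reachable_fromEdgeSet_of_mem hn
      hno _ ⟨hxy, hxyI⟩ ((hI.insert_iff (hB.prop.1 hxy) hxyI).2 hn)) h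
  have heB := mt reachable_fromEdgeSet_of_mem hnB
  exact heB (hB.mem_of_prop_insert ((hB.prop.insert_iff he heB).2 hnB))

/-- The graphic (cycle) matroid of a simple graph, on the ground set of its edges. -/
def graphicMatroid (G : SimpleGraph V) : Matroid (Sym2 V) :=
  (IndepMatroid.ofFinitary G.edgeSet (IsForestSet G) isForestSet_empty
    (fun _ _ hJ hIJ ↦ hJ.subset hIJ) (fun _ _ ↦ IsForestSet.exists_insert_of_not_maximal)
    (fun _ ↦ isForestSet_of_forall_finite) fun _ hF ↦ hF.1).matroid

theorem graphicMatroid_ground : (graphicMatroid G).E = G.edgeSet := rfl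

theorem graphicMatroid_indep_iff : (graphicMatroid G).Indep F ↔ IsForestSet G F := Iff.rfl

theorem mk_mem_closure_graphicMatroid_iff (hF : (graphicMatroid G).Indep F) :
    s(u, v) ∈ (graphicMatroid G).closure F ↔
      G.Adj u v ∧ (fromEdgeSet F).Reachable u v := by
  rw [hF.mem_closure_iff', graphicMatroid_ground, mem_edgeSet, and_congr_right_iff]
  intro he
  by_cases heF : s(u, v) ∈ F
  · simp only [heF, implies_true, reachable_fromEdgeSet_of_mem]
  · rw [graphicMatroid_indep_iff, IsForestSet.insert_iff hF he heF]
    simp only [heF, imp_false, not_not]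

instance graphicMatroid_loopless : (graphicMatroid G).Loopless := by
  refine (Matroid.loopless_iff _).2 (Set.eq_empty_of_forall_notMem fun e he ↦ ?_)
  induction e with | h u v
  have := (mk_mem_closure_graphicMatroid_iff (graphicMatroid G).empty_indep).1 he
  rw [fromEdgeSet_empty, reachable_bot] at this
  exact this.1.ne this.2

theorem numForests_eq_numIndep [Fintype V] [DecidableEq V] (k : ℕ) :
    numForests V G k = numIndep (graphicMatroid G) k := by
  rw [numForests, numIndep, ← Set.ncard_coe_finset]
  refine congrArg Set.ncard (Set.ext fun F ↦ ?_)
  simp only [Finset.coe_filter, Finset.mem_univ, true_and, Set.mem_ofPred_eq,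
    graphicMatroid_indep_iff, IsForestSet]
  tauto

theorem IsForestSet.card_connectedComponent_add_le [Finite V] {F : Finset (Sym2 V)}
    (hF : IsForestSet G F) :
    Nat.card (fromEdgeSet (F : Set (Sym2 V))).ConnectedComponent + F.card ≤ Nat.card V := by
  induction F using Finset.induction_on with
  | empty =>
    rw [Finset.card_empty, add_zero]
    exact Nat.card_le_card_of_surjective (connectedComponentMk _) Quot.mk_surjective
  | insert e F he ih =>
    induction e with | h u v
    rw [Finset.coe_insert] at hF ⊢
    have hF' := hF.subset (Set.subset_insert _ _)
    have hnot := (hF'.insert_iff (hF.1 (Set.mem_insert _ _)) he).1 hF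
    set K := fromEdgeSet (F : Set (Sym2 V))
    set K' := fromEdgeSet (insert s(u, v) (F : Set (Sym2 V)))
    have hle : K ≤ K' := fromEdgeSet_mono (Set.subset_insert _ _)
    have hsurj := ConnectedComponent.surjective_map_ofLE hle
    have hlt : Nat.card K'.ConnectedComponent < Nat.card K.ConnectedComponent := by
      by_contra! hge
      refine hnot (ConnectedComponent.eq.1
        ((hsurj.bijective_of_nat_card_le hge).injective (ConnectedComponent.eq.2 ?_)))
      exact reachable_fromEdgeSet_of_mem (Set.mem_insert _ _)
    have := ih hF'
    rw [Finset.card_insert_of_notMem he]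
    lia

theorem fin_three_add_eq_add_iff : ∀ {a b c d : Fin 3}, a ≠ b → c ≠ d →
    (a + b = c + d ↔ c = a ∧ b = d ∨ c = b ∧ a = d) := by
  decide

/-- The colour that a labelling `φ` of the vertices by `Fin 3` gives to an edge: the sum of the
labels of its two ends, which determines the pair of labels if they are distinct. -/
def labelSum (φ : V → Fin 3) : Sym2 V → Fin 3 :=
  Sym2.lift ⟨fun u v ↦ φ u + φ v, fun _ _ ↦ add_comm _ _⟩

theorem label_ne_of_notMem_closure {φ : V → Fin 3} (hF : (graphicMatroid G).Indep F)
    (hφ : ∀ u v, φ u = φ v ↔ (fromEdgeSet F).Reachable u v)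
    (h : s(u, v) ∈ (graphicMatroid G).E \ (graphicMatroid G).closure F) : φ u ≠ φ v := fun huv ↦
  h.2 ((mk_mem_closure_graphicMatroid_iff hF).2 ⟨h.1, (hφ u v).1 huv⟩)

theorem isParallelColoring_labelSum {φ : V → Fin 3} (hF : (graphicMatroid G).Indep F)
    (hφ : ∀ u v, φ u = φ v ↔ (fromEdgeSet F).Reachable u v) :
    IsParallelColoring (graphicMatroid G) F (labelSum φ) := by
  intro i hi j hj
  induction i with | h u v
  induction j with | h x y
  rw [mk_mem_closure_graphicMatroid_iff ((hF.notMem_closure_iff hi.1).1 hi.2).1,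
    fromEdgeSet_insert_eq_sup_edge, reachable_sup_edge_iff]
  have hi' := label_ne_of_notMem_closure hF hφ hi
  have hj' := label_ne_of_notMem_closure hF hφ hj
  simp only [labelSum, Sym2.lift_mk, ← hφ, hj', false_or, fin_three_add_eq_add_iff hi' hj',
    and_iff_right_iff_imp]
  exact fun _ ↦ hj.1

theorem exists_label_eq_iff_reachable [Finite V] {F : Finset (Sym2 V)}
    (hF : IsForestSet G F) (hcard : F.card + 3 = Nat.card V) :
    ∃ φ : V → Fin 3, ∀ u v, φ u = φ v ↔ (fromEdgeSet (F : Set (Sym2 V))).Reachable u v := by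
  have hcomp : Nat.card (fromEdgeSet (F : Set (Sym2 V))).ConnectedComponent ≤ 3 := by
    have := hF.card_connectedComponent_add_le
    lia
  have := Fintype.ofFinite (fromEdgeSet (F : Set (Sym2 V))).ConnectedComponent
  rw [Nat.card_eq_fintype_card, ← Fintype.card_fin 3] at hcomp
  obtain ⟨ι⟩ := Function.Embedding.nonempty_of_card_le hcomp
  exact ⟨fun u ↦ ι (connectedComponentMk _ u),
    fun u v ↦ ι.injective.eq_iff.trans ConnectedComponent.eq⟩

theorem isBase_graphicMatroid_of_isTree {T : SimpleGraph V} (hT : T.IsTree) (hle : T ≤ G) :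
    (graphicMatroid G).IsBase T.edgeSet := by
  have hF : (graphicMatroid G).Indep T.edgeSet :=
    ⟨edgeSet_mono hle, (fromEdgeSet_edgeSet T).symm ▸ hT.isAcyclic⟩
  refine hF.isBase_of_ground_subset_closure fun e he ↦ ?_
  induction e with | h u v
  rw [mk_mem_closure_graphicMatroid_iff hF, fromEdgeSet_edgeSet]
  exact ⟨he, hT.connected u v⟩

theorem eRank_graphicMatroid_add_one [Finite V] (hG : G.Connected) :
    (graphicMatroid G).eRank + 1 = Nat.card V := by
  obtain ⟨T, hle, hT⟩ := hG.exists_isTree_le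
  rw [← (isBase_graphicMatroid_of_isTree hT hle).encard_eq_eRank,
    ← (Set.toFinite T.edgeSet).cast_ncard_eq, ← (isTree_iff_connected_and_card.1 hT).2]
  rfl

theorem eq_of_reachable_fromEdgeSet_of_forall_notMem (hu : ∀ e ∈ F, u ∉ e)
    (h : (fromEdgeSet F).Reachable u v) : u = v := by
  obtain ⟨p⟩ := h
  cases p with
  | nil => rfl
  | cons hadj => exact absurd (Sym2.mem_mk_left _ _) (hu _ ((fromEdgeSet_adj F).1 hadj).1)

/-- Remove from a spanning tree the edges at two of its leaves. -/
theorem exists_isForestSet_isolating_pair [Finite V] (hG : G.Connected) {n : ℕ}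
    (hV : Nat.card V = n + 3) :
    ∃ (u v : V) (F : Finset (Sym2 V)), u ≠ v ∧ IsForestSet G F ∧ F.card = n ∧
      (∀ e ∈ F, u ∉ e) ∧ ∀ e ∈ F, v ∉ e := by
  have := Fintype.ofFinite V
  have : Nontrivial V := Finite.one_lt_card_iff_nontrivial.1 (by lia)
  obtain ⟨T, hle, hT⟩ := hG.exists_isTree_le
  obtain ⟨u, v, huv, hu, hv⟩ := hT.exists_ne_and_degree_eq_one
  have hcard : n ≤ (T.edgeFinset \ (T.incidenceFinset u ∪ T.incidenceFinset v)).card := by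
    have hdiff := Finset.le_card_sdiff (T.incidenceFinset u ∪ T.incidenceFinset v) T.edgeFinset
    have hunion := Finset.card_union_le (T.incidenceFinset u) (T.incidenceFinset v)
    rw [card_incidenceFinset_eq_degree, card_incidenceFinset_eq_degree] at hunion
    have := hT.card_edgeFinset
    rw [Nat.card_eq_fintype_card] at hV
    lia
  obtain ⟨F, hFT, hF⟩ := Finset.exists_subset_card_eq hcard
  have hmem {e} (he : e ∈ F) : e ∈ T.edgeSet ∧ u ∉ e ∧ v ∉ e := by
    have := hFT he
    simp only [Finset.mem_sdiff, Finset.mem_union, mem_edgeFinset, mem_incidenceFinset,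
      incidenceSet, Set.mem_sep_iff] at this
    tauto
  refine ⟨u, v, F, huv, ?_, hF, fun e he ↦ (hmem he).2.1, fun e he ↦ (hmem he).2.2⟩
  exact IsForestSet.subset (isBase_graphicMatroid_of_isTree hT hle).indep fun e he ↦ (hmem he).1

theorem setOf_labelSum_eq_subset {φ : V → Fin 3} (hF : (graphicMatroid G).Indep F)
    (hφ : ∀ u v, φ u = φ v ↔ (fromEdgeSet F).Reachable u v) (huv : u ≠ v)
    (hu : ∀ e ∈ F, u ∉ e) (hv : ∀ e ∈ F, v ∉ e) :
    {e ∈ (graphicMatroid G).E \ (graphicMatroid G).closure F |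
      labelSum φ e = labelSum φ s(u, v)} ⊆ {s(u, v)} := by
  have hu' {w} (h : φ u = φ w) : u = w :=
    eq_of_reachable_fromEdgeSet_of_forall_notMem hu ((hφ _ _).1 h)
  have hv' {w} (h : φ v = φ w) : v = w :=
    eq_of_reachable_fromEdgeSet_of_forall_notMem hv ((hφ _ _).1 h)
  rintro e ⟨he, hsum⟩
  induction e with | h x y
  rcases (fin_three_add_eq_add_iff (label_ne_of_notMem_closure hF hφ he) (mt hu' huv)).1 hsum with
    ⟨hux, hyv⟩ | ⟨huy, hxv⟩
  · rw [hu' hux, hv' hyv.symm, Set.mem_singleton_iff]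
  · rw [hu' huy, hv' hxv.symm, Set.mem_singleton_iff, Sym2.eq_swap]

theorem exists_isParallelColoring_graphicMatroid [Finite V] {n : ℕ} (hV : Nat.card V = n + 3)
    (F : Finset (Sym2 V)) (hF : (graphicMatroid G).Indep F) (hFn : F.card = n) :
    ∃ c : Sym2 V → Fin 3, IsParallelColoring (graphicMatroid G) F c := by
  obtain ⟨φ, hφ⟩ := exists_label_eq_iff_reachable hF (by rw [hFn, hV])
  exact ⟨_, isParallelColoring_labelSum hF hφ⟩

theorem eRank_graphicMatroid [Finite V] (hG : G.Connected) {n : ℕ} (hV : Nat.card V = n + 3) :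
    (graphicMatroid G).eRank = (n + 2 : ℕ) := by
  refine ENat.add_left_injective_of_ne_top ENat.one_ne_top ?_
  simp only [eRank_graphicMatroid_add_one hG, hV]
  norm_cast

theorem mul_numIndep_graphicMatroid_le [Finite V] (hG : G.Connected) {n : ℕ}
    (hV : Nat.card V = n + 3) :
    3 / 2 * (n + 2) * (numIndep (graphicMatroid G) n * numIndep (graphicMatroid G) (n + 2)) ≤
      (n + 1) * (numIndep (graphicMatroid G) (n + 1) : ℝ) ^ 2 :=
  mul_numIndep_mul_numIndep_le (by norm_num) (eRank_graphicMatroid hG hV).ge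
    (exists_isParallelColoring_graphicMatroid hV)

theorem isCircuit_edgeSet_of_numIndep_eq [Finite V] (hG : G.Connected) {n : ℕ}
    (hV : Nat.card V = n + 3)
    (heq : 3 / 2 * (n + 2) *
      (numIndep (graphicMatroid G) n * numIndep (graphicMatroid G) (n + 2)) =
        (n + 1) * (numIndep (graphicMatroid G) (n + 1) : ℝ) ^ 2) :
    (graphicMatroid G).IsCircuit G.edgeSet := by
  obtain ⟨x, hx⟩ := exists_mul_ncard_color_eq_of_numIndep_eq (by norm_num)
    (eRank_graphicMatroid hG hV).ge (exists_isParallelColoring_graphicMatroid hV) heq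
  have hhalf : x = 1 / 2 := by
    obtain ⟨u, v, F, huv, hF, hFn, hu, hv⟩ := exists_isForestSet_isolating_pair hG hV
    obtain ⟨φ, hφ⟩ := exists_label_eq_iff_reachable hF (by rw [hFn, hV])
    have hxm := hx F hF hFn _ (isParallelColoring_labelSum hF hφ) (labelSum φ s(u, v))
    have hle := Set.ncard_le_ncard (setOf_labelSum_eq_subset hF hφ huv hu hv)
    rw [Set.ncard_singleton] at hle
    rcases Nat.le_one_iff_eq_zero_or_eq_one.1 hle with h | h <;> rw [h] at hxm
    · norm_num at hxm
    · linear_combination hxm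
  refine isCircuit_ground_of_ncard_color_eq_one (eRank_graphicMatroid hG hV) fun F hF hFn ↦ ?_
  obtain ⟨c, hc⟩ := exists_isParallelColoring_graphicMatroid hV F hF hFn
  refine ⟨c, hc, fun k ↦ ?_⟩
  have hxm := hx F hF hFn c hc k
  rw [hhalf] at hxm
  exact_mod_cast (by linarith : (Set.ncard _ : ℝ) = 1)

theorem isForestSet_edgeSet_diff_iff {s : Set (Sym2 V)} :
    IsForestSet G (G.edgeSet \ s) ↔ (G.deleteEdges s).IsAcyclic := by
  rw [IsForestSet, ← deleteEdges_fromEdgeSet, fromEdgeSet_edgeSet]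
  exact and_iff_right Set.sdiff_subset

theorem isForestSet_edgeSet_iff : IsForestSet G G.edgeSet ↔ G.IsAcyclic := by
  rw [IsForestSet, fromEdgeSet_edgeSet]
  exact and_iff_right Set.Subset.rfl

/-- A proper subset of a circuit contains no cycle, so every edge lies on the cycle `f`. -/
theorem edgeSet_subset_image_of_isCircuit (hC : (graphicMatroid G).IsCircuit G.edgeSet) {n : ℕ}
    (hn : 3 ≤ n) (f : Copy (cycleGraph n) G) :
    G.edgeSet ⊆ Sym2.map f '' (cycleGraph n).edgeSet := by
  intro e he
  by_contra hef
  have hacyc : (G.deleteEdges {e}).IsAcyclic :=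
    isForestSet_edgeSet_diff_iff.1 (hC.sdiff_singleton_indep he)
  refine isAcyclic_iff_free_cycleGraph.1 hacyc n hn ⟨⟨⟨f, fun {a b} hab ↦ ?_⟩, f.injective⟩⟩
  rw [deleteEdges_adj]
  exact ⟨f.toHom.map_adj hab, fun h ↦ hef ⟨s(a, b), hab, h⟩⟩

theorem nonempty_iso_cycleGraph_of_isCircuit [Finite V] (hG : G.Connected)
    (hC : (graphicMatroid G).IsCircuit G.edgeSet) :
    Nonempty (G ≃g cycleGraph (Nat.card V)) := by
  have hcyc : ¬ G.IsAcyclic := fun h ↦ hC.not_indep (isForestSet_edgeSet_iff.2 h)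
  simp only [isAcyclic_iff_free_cycleGraph, not_forall, not_not] at hcyc
  obtain ⟨n, hn, ⟨f⟩⟩ := hcyc
  have hedge := edgeSet_subset_image_of_isCircuit hC hn f
  have : Nontrivial V := by
    have := Fin.nontrivial_iff_two_le.2 (le_of_lt hn)
    exact f.injective.nontrivial
  have hsurj : Function.Surjective f := fun v ↦ by
    obtain ⟨u, huv⟩ := hG.preconnected.exists_adj_of_nontrivial v
    obtain ⟨e, -, he⟩ := hedge (G.mem_edgeSet.2 huv)
    obtain ⟨a, -, ha⟩ := Sym2.mem_map.1 (he ▸ Sym2.mem_mk_left v u)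
    exact ⟨a, ha⟩
  have hadj {a b} : G.Adj (f a) (f b) ↔ (cycleGraph n).Adj a b := by
    refine ⟨fun h ↦ ?_, f.toHom.map_adj⟩
    obtain ⟨e, he, heq⟩ := hedge (G.mem_edgeSet.2 h)
    obtain rfl : e = s(a, b) := Sym2.map.injective f.injective heq
    exact he
  let φ : cycleGraph n ≃g G := ⟨Equiv.ofBijective f ⟨f.injective, hsurj⟩, hadj⟩
  have hcard : n = Nat.card V := (Nat.card_fin n).symm.trans (Nat.card_congr φ.toEquiv)
  exact hcard ▸ ⟨φ.symm⟩

theorem isCircuit_edgeSet_of_forall_degree_eq_two [Fintype V] (hG : G.Connected)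
    (hdeg : ∀ v, G.degree v = 2) : (graphicMatroid G).IsCircuit G.edgeSet := by
  have hcard : G.edgeSet.ncard = Nat.card V := by
    have h := G.sum_degrees_eq_twice_card_edges
    simp only [hdeg, Finset.sum_const, Finset.card_univ, smul_eq_mul] at h
    rw [← coe_edgeFinset, Set.ncard_coe_finset, Nat.card_eq_fintype_card]
    lia
  refine Matroid.isCircuit_iff_dep_forall_sdiff_singleton_indep.2
    ⟨⟨fun h ↦ ?_, Set.Subset.rfl⟩, fun e he ↦ ?_⟩
  · have h := (isTree_iff_connected_and_card.1 ⟨hG, isForestSet_edgeSet_iff.1 h⟩).2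
    rw [Nat.card_coe_set_eq] at h
    lia
  · induction e with | h u v
    have hcycles : G.IsCycles := fun v _ ↦ by
      rw [← Nat.card_coe_set_eq, Nat.card_eq_fintype_card, card_neighborSet_eq_degree, hdeg]
    have hconn := hG.connected_delete_edge_of_not_isBridge fun h ↦
      isBridge_iff.1 h (hcycles.reachable_deleteEdges he)
    refine isForestSet_edgeSet_diff_iff.2 (isTree_iff_connected_and_card.2 ⟨hconn, ?_⟩).isAcyclic
    rw [Nat.card_coe_set_eq, edgeSet_deleteEdges, Set.ncard_sdiff_singleton_add_one he, hcard]

theorem isCircuit_edgeSet_iff_nonempty_iso_cycleGraph [Finite V] (hG : G.Connected) {n : ℕ}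
    (hV : Nat.card V = n + 3) :
    (graphicMatroid G).IsCircuit G.edgeSet ↔ Nonempty (G ≃g cycleGraph (n + 3)) := by
  have := Fintype.ofFinite V
  refine ⟨fun h ↦ hV ▸ nonempty_iso_cycleGraph_of_isCircuit hG h, fun ⟨f⟩ ↦ ?_⟩
  refine isCircuit_edgeSet_of_forall_degree_eq_two hG fun v ↦ ?_
  rw [← f.degree_eq v, ← cycleGraph_degree_three_le (v := f v)]

theorem ncard_edgeSet_of_isCircuit [Finite V] (hG : G.Connected)
    (hC : (graphicMatroid G).IsCircuit G.edgeSet) : G.edgeSet.ncard = Nat.card V := by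
  have h := hC.eRk_add_one_eq
  rw [← graphicMatroid_ground, Matroid.eRk_ground, eRank_graphicMatroid_add_one hG,
    graphicMatroid_ground, ← (Set.toFinite G.edgeSet).cast_ncard_eq] at h
  exact_mod_cast h.symm

theorem numIndep_eq_of_isCircuit_edgeSet [Finite V] (hG : G.Connected) {n : ℕ}
    (hV : Nat.card V = n + 3) (hC : (graphicMatroid G).IsCircuit G.edgeSet) :
    3 / 2 * (n + 2) * (numIndep (graphicMatroid G) n * numIndep (graphicMatroid G) (n + 2)) =
      (n + 1) * (numIndep (graphicMatroid G) (n + 1) : ℝ) ^ 2 := by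
  have hE : (graphicMatroid G).E.ncard = n + 3 := (ncard_edgeSet_of_isCircuit hG hC).trans hV
  have hchoose {k} (hk : k < n + 3) : numIndep (graphicMatroid G) k = (n + 3).choose k :=
    hE ▸ numIndep_eq_choose_of_isCircuit_ground hC (hE ▸ hk)
  rw [hchoose (by lia), hchoose (by lia), hchoose (by lia)]
  have h := choose_mul_choose_mul_eq_choose_sq_mul (n + 3) n
  rw [show n + 3 - n = 3 by lia, show n + 3 - (n + 1) = 2 by lia] at h
  have h' := congrArg (Nat.cast (R := ℝ)) h
  push_cast at h'
  linear_combination h' / 2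

end GraphicMatroid

/-- **Equality conditions for graphical matroids.**  For a simple connected graph `G` on
`N ≥ 3` vertices, `I(N-2)² ≥ (3/2)·(1 + 1/(N-2))·I(N-3)·I(N-1)`, with equality if and only if
`G` is a cycle on `N` vertices. -/
theorem graphical_matroid_equality
    (V : Type*) [Fintype V] [DecidableEq V] (G : SimpleGraph V)
    (hN : 3 ≤ Fintype.card V) (hconn : G.Connected) :
    ((3 : ℝ) / 2) * (1 + 1 / ((Fintype.card V : ℝ) - 2)) *
          (numForests V G (Fintype.card V - 3) : ℝ) *
          (numForests V G (Fintype.card V - 1) : ℝ) ≤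
        (numForests V G (Fintype.card V - 2) : ℝ) ^ 2 ∧
      ((numForests V G (Fintype.card V - 2) : ℝ) ^ 2 =
          ((3 : ℝ) / 2) * (1 + 1 / ((Fintype.card V : ℝ) - 2)) *
            (numForests V G (Fintype.card V - 3) : ℝ) *
            (numForests V G (Fintype.card V - 1) : ℝ) ↔
        Nonempty (G ≃g SimpleGraph.cycleGraph (Fintype.card V))) := by
  obtain ⟨n, hn⟩ := Nat.exists_eq_add_of_le' hN
  have hV : Nat.card V = n + 3 := Nat.card_eq_fintype_card.trans hn
  have hpos : (0 : ℝ) < n + 1 := n.cast_add_one_pos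
  have hconst (a b : ℝ) : 3 / 2 * (1 + 1 / (((n + 3 : ℕ) : ℝ) - 2)) * a * b =
      3 / 2 * (n + 2) * (a * b) / (n + 1) := by
    rw [show ((n + 3 : ℕ) : ℝ) - 2 = n + 1 by push_cast; ring]
    field_simp
    ring
  rw [hn, show n + 3 - 3 = n from rfl, show n + 3 - 2 = n + 1 from rfl,
    show n + 3 - 1 = n + 2 from rfl, hconst, div_le_iff₀ hpos, eq_div_iff hpos.ne',
    mul_comm _ ((n : ℝ) + 1), eq_comm, numForests_eq_numIndep, numForests_eq_numIndep,
    numForests_eq_numIndep, ← isCircuit_edgeSet_iff_nonempty_iso_cycleGraph hconn hV]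
  exact ⟨mul_numIndep_graphicMatroid_le hconn hV, isCircuit_edgeSet_of_numIndep_eq hconn hV,
    numIndep_eq_of_isCircuit_edgeSet hconn hV⟩
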